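/- arXiv:2011.01592 — 2 statements merged into one kernel-verified Lean document; each statement's English description precedes it below -/
import Mathlib

section
/- For every integer k ≥ 2, we have g^k_2(5) = 2^k + 1; that is, every Gallai-k-coloring of K_{2^k+1} contains a set of 5 vertices spanning edges in at most 2 colors, and there exists a Gallai-k-coloring of K_{2^k} in which every set of 5 vertices spans edges in at least 3 colors. -/
open Finset

/-- A Gallai coloring: a symmetric edge-coloring of the complete graph on `V`
with no rainbow triangle. -/
def IsGallai {V β : Type*} (c : V → V → β) : Prop :=
  (∀ a b, c a b = c b a) ∧
  ∀ a b d : V, a ≠ b → a ≠ d → b ≠ d →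
    ¬(c a b ≠ c a d ∧ c a b ≠ c b d ∧ c a d ≠ c b d)

/-- The set of colors appearing on edges inside the vertex set `S`. -/
def colorsOn {V β : Type*} [DecidableEq V] [DecidableEq β]
    (c : V → V → β) (S : Finset V) : Finset β :=
  ((S ×ˢ S).filter fun p => p.1 ≠ p.2).image fun p => c p.1 p.2

/-- `gallaiNum k q p` is the smallest positive `n` such that every Gallai-`k`-coloring
of `K_n` contains a set of `p` vertices whose induced edges use at most `q` colors. -/
noncomputable def gallaiNum (k q p : ℕ) : ℕ :=
  sInf {n : ℕ | 0 < n ∧ ∀ c : Fin n → Fin n → Fin k, IsGallai c →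
    ∃ S : Finset (Fin n), S.card = p ∧ (colorsOn c S).card ≤ q}

/-!
Gallai's structure theorem: the colors that occur on a finite set `W` of vertices without connecting
it yield collapses of `W`, and iterating them maps `W` onto at least two vertices spanning at most
two colors, such that the color between two fibers is the color between their images. If every set
spanning at most two colors has at most four vertices, there are at most four fibers.

Write `ω K W` for the size of the largest subset of `W` all of whose edges have colors in `K`.
Graphs on at most four vertices satisfy the weighted perfect graph inequality `∑ p * r ≤ M * N`, so
induction along the fibers and the Cauchy-Schwarz inequality give
`#W ^ 2 ≤ ω P W * ω Q W * ω R W` whenever every color lies in at least two of `P`, `Q`, `R`. For a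
set `K` of `k + 1` colors containing `a ≠ b`, the choice `{a, b}`, `K \ {a}`, `K \ {b}` yields
`#W ^ 2 ≤ 4 * 2 ^ k * 2 ^ k` inductively, hence `#W ≤ 2 ^ (k + 1)`.

The bound is attained by coloring a pair of binary words with the first position where they differ.
-/

/-! ### Color cliques -/

section ColorClique

variable {V β : Type*} {c : V → V → β} {K P Q R : Set β} {W X : Finset V}

/-- `W` is a clique in the graph formed by the edges whose color belongs to `K`. -/
def IsColorClique (c : V → V → β) (K : Set β) (W : Finset V) : Prop :=
  (W : Set V).Pairwise fun x y => c x y ∈ K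

theorem IsColorClique.subset (hW : IsColorClique c K W) (hXW : X ⊆ W) : IsColorClique c K X :=
  Set.Pairwise.mono (coe_subset.2 hXW) hW

theorem IsColorClique.mono {L : Set β} (hW : IsColorClique c K W) (hKL : K ⊆ L) :
    IsColorClique c L W :=
  Set.Pairwise.imp hW fun _ _ h => hKL h

theorem isColorClique_of_card_le_one (hW : #W ≤ 1) : IsColorClique c K W :=
  fun _ hx _ hy hxy => absurd (card_le_one.1 hW _ hx _ hy) hxy

theorem not_isColorClique_iff :
    ¬ IsColorClique c K W ↔ ∃ a ∈ W, ∃ b ∈ W, a ≠ b ∧ c a b ∉ K := by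
  simp only [IsColorClique, Set.Pairwise, mem_coe, not_forall, exists_prop]

-- Every color on `W` misses at most one of `P`, `Q`, `R`, so two colors cannot miss all three.
theorem IsColorClique.or_of_two_colors {i j : β} (hij : IsColorClique c {i, j} W)
    (hPQ : IsColorClique c (P ∪ Q) W) (hQR : IsColorClique c (Q ∪ R) W)
    (hPR : IsColorClique c (P ∪ R) W) :
    IsColorClique c P W ∨ IsColorClique c Q W ∨ IsColorClique c R W := by
  by_contra! h
  simp only [not_isColorClique_iff] at h
  obtain ⟨⟨x, hx, x', hx', hxx, hP⟩, ⟨y, hy, y', hy', hyy, hQ⟩, ⟨z, hz, z', hz', hzz, hR⟩⟩ := h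
  have hx2 := hij hx hx' hxx
  have hy2 := hij hy hy' hyy
  have hz2 := hij hz hz' hzz
  have hxQ : c x x' ∈ Q := (hPQ hx hx' hxx).resolve_left hP
  have hxR : c x x' ∈ R := (hPR hx hx' hxx).resolve_left hP
  have hyR : c y y' ∈ R := (hQR hy hy' hyy).resolve_left hQ
  simp only [Set.mem_insert_iff, Set.mem_singleton_iff] at hx2 hy2 hz2
  grind

theorem colorsOn_subset_iff [DecidableEq V] [DecidableEq β] {T : Finset β} :
    colorsOn c W ⊆ T ↔ IsColorClique c T W := by
  simp only [colorsOn, image_subset_iff, mem_filter, mem_product, Prod.forall, IsColorClique,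
    Set.Pairwise, mem_coe]
  grind

open Classical in
/-- The clique number of `W` in the graph formed by the edges whose color belongs to `K`. -/
noncomputable def colorCliqueNum (c : V → V → β) (K : Set β) (W : Finset V) : ℕ :=
  {X ∈ W.powerset | IsColorClique c K X}.sup card

theorem IsColorClique.card_le_colorCliqueNum (hX : IsColorClique c K X) (hXW : X ⊆ W) :
    #X ≤ colorCliqueNum c K W := by
  classical
  exact le_sup (f := card) (mem_filter.2 ⟨mem_powerset.2 hXW, hX⟩)

theorem colorCliqueNum_le {n : ℕ} (h : ∀ X ⊆ W, IsColorClique c K X → #X ≤ n) :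
    colorCliqueNum c K W ≤ n := by
  classical
  refine Finset.sup_le fun X hX => ?_
  obtain ⟨hXW, hX⟩ := mem_filter.1 hX
  exact h X (mem_powerset.1 hXW) hX

theorem exists_isColorClique_card_eq (c : V → V → β) (K : Set β) (W : Finset V) :
    ∃ X ⊆ W, IsColorClique c K X ∧ #X = colorCliqueNum c K W := by
  classical
  have hne : {X ∈ W.powerset | IsColorClique c K X}.Nonempty :=
    ⟨∅, mem_filter.2 ⟨empty_mem_powerset W, isColorClique_of_card_le_one (by simp)⟩⟩
  obtain ⟨X, hX, hcard⟩ := exists_mem_eq_sup _ hne card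
  obtain ⟨hXW, hX⟩ := mem_filter.1 hX
  exact ⟨X, mem_powerset.1 hXW, hX, hcard.symm⟩

end ColorClique

/-! ### Gallai's structure theorem -/

section ColorConnected

variable {V β : Type*} {c : V → V → β} {i : β} {W : Finset V}

/-- `x` and `y` are joined by a path of color `i` inside `W`. Every vertex is connected to itself,
and a vertex outside `W` to no other one. -/
def ColorConnected (c : V → V → β) (i : β) (W : Finset V) : V → V → Prop :=
  Relation.EqvGen fun a b => a ∈ W ∧ b ∈ W ∧ c a b = i

theorem ColorConnected.mem_iff {A : Set V} {x y : V} (h : ColorConnected c i W x y)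
    (hA : ∀ a ∈ W, ∀ b ∈ W, c a b = i → (a ∈ A ↔ b ∈ A)) : x ∈ A ↔ y ∈ A := by
  induction h with
  | rel a b hab => exact hA a hab.1 b hab.2.1 hab.2.2
  | refl a => rfl
  | symm a b _ ih => exact ih.symm
  | trans a b d _ _ ihab ihbd => exact ihab.trans ihbd

theorem ColorConnected.mem {x y : V} (h : ColorConnected c i W x y) (hx : x ∈ W) : y ∈ W :=
  (h.mem_iff (A := W) fun _ ha _ hb _ => iff_of_true ha hb).1 hx

/-- Color `i` occurs on an edge of `W`, but does not connect `W`. -/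
def IsDisconnectedColor (c : V → V → β) (i : β) (W : Finset V) : Prop :=
  (∃ a ∈ W, ∃ b ∈ W, a ≠ b ∧ c a b = i) ∧ ∃ x ∈ W, ∃ y ∈ W, ¬ ColorConnected c i W x y

theorem isDisconnectedColor_of_cut (hi : ∃ a ∈ W, ∃ b ∈ W, a ≠ b ∧ c a b = i) {A : Set V} {x y : V}
    (hx : x ∈ W) (hy : y ∈ W) (hxA : x ∈ A) (hyA : y ∉ A)
    (hA : ∀ a ∈ W, ∀ b ∈ W, c a b = i → (a ∈ A ↔ b ∈ A)) : IsDisconnectedColor c i W :=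
  ⟨hi, x, hx, y, hy, fun h => hyA ((h.mem_iff hA).1 hxA)⟩

end ColorConnected

namespace IsGallai

variable {V β : Type*} {c : V → V → β} {i : β} {W U : Finset V}

theorem eq_of_ne (hc : IsGallai c) {w a b : V} (hwa : w ≠ a) (hwb : w ≠ b)
    (ha : c w a ≠ c a b) (hb : c w b ≠ c a b) : c w a = c w b := by
  by_contra hne
  have hab : a ≠ b := by rintro rfl; exact hne rfl
  exact hc.2 w a b hwa hwb hab ⟨hne, ha, hb⟩

theorem eq_of_colorConnected (hc : IsGallai c) {w a b : V} (hw : w ∈ W)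
    (hwa : ¬ ColorConnected c i W w a) (hab : ColorConnected c i W a b) : c w a = c w b := by
  induction hab with
  | rel a b hab =>
    obtain ⟨ha, hb, rfl⟩ := hab
    have hwb : ¬ ColorConnected c (c a b) W w b :=
      fun h => hwa (h.trans _ _ _ (.symm _ _ (.rel _ _ ⟨ha, hb, rfl⟩)))
    exact hc.eq_of_ne (by rintro rfl; exact hwa (.refl _)) (by rintro rfl; exact hwb (.refl _))
      (fun h => hwa (.rel _ _ ⟨hw, ha, h⟩)) (fun h => hwb (.rel _ _ ⟨hw, hb, h⟩))
  | refl a => rfl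
  | symm a b hab ih => exact (ih fun h => hwa (h.trans _ _ _ hab)).symm
  | trans a b d hab _ ihab ihbd =>
    exact (ihab hwa).trans (ihbd fun h => hwa (h.trans _ _ _ (hab.symm _ _)))

theorem eq_of_not_colorConnected (hc : IsGallai c) {v a b b' : V} (hv : v ∉ U) (ha : a ∈ U)
    (hb' : b' ∈ U) (hab : ¬ ColorConnected c i U a b)
    (hbb' : ColorConnected c i U b b') (hvb' : c v b' = i) (hva : c v a ≠ i) :
    c a b = c v a := by
  have hab' : ¬ ColorConnected c i U a b' := fun h => hab (h.trans _ _ _ (hbb'.symm _ _))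
  have hne : c a b' ≠ i := fun h => hab' (.rel _ _ ⟨ha, hb', h⟩)
  calc c a b = c a b' := hc.eq_of_colorConnected ha hab hbb'
    _ = c a v := (hc.eq_of_ne (by rintro rfl; exact hv ha) (by rintro rfl; exact hab' (.refl _))
      (by rwa [hc.1 a v, hvb']) (by rwa [hvb'])).symm
    _ = c v a := hc.1 a v

theorem eq_of_mem_component (hc : IsGallai c) {v h a b : V} (hv : v ∉ U)
    (hmeet : ∀ b ∈ U, ∃ b' ∈ U, ColorConnected c i U b b' ∧ c v b' = i)
    (hh : h ∈ U) (hvh : c v h ≠ i) (hb : b ∈ U) (hha : ColorConnected c i U h a)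
    (hhb : ¬ ColorConnected c i U h b) : c a b = c v h := by
  obtain ⟨b', hb', hbb', hvb'⟩ := hmeet b hb
  calc c a b = c b a := hc.1 a b
    _ = c b h := (hc.eq_of_colorConnected hb (fun h => hhb (h.symm _ _)) hha).symm
    _ = c h b := hc.1 b h
    _ = c v h := hc.eq_of_not_colorConnected hv hh hb' hhb hbb' hvb' hvh

section Insert

variable [DecidableEq V]

theorem exists_isDisconnectedColor_insert_of_monochromatic_star (hc : IsGallai c) {v : V} {x : β}
    (hv : v ∉ U) (hstar : ∀ u ∈ U, c v u = x) (hU : U.Nonempty)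
    (hW : ¬ IsColorClique c {x} (insert v U)) : ∃ i, IsDisconnectedColor c i (insert v U) := by
  obtain ⟨a, ha, b, hb, hab, hne⟩ := not_isColorClique_iff.1 hW
  obtain ⟨u, hu⟩ := hU
  refine ⟨c a b, isDisconnectedColor_of_cut (A := {v}) ⟨a, ha, b, hb, hab, rfl⟩
    (mem_insert_self v U) (mem_insert_of_mem hu) rfl (by rintro rfl; exact hv hu) ?_⟩
  have hsymm := hc.1
  simp only [Set.mem_singleton_iff] at hne ⊢
  grind

theorem exists_isDisconnectedColor_insert_of_two_colors (hc : IsGallai c) {v : V} {j : β}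
    (hv : v ∉ U) (hU : IsColorClique c {i, j} U)
    (hW : ∀ i j, ¬ IsColorClique c {i, j} (insert v U)) :
    ∃ i, IsDisconnectedColor c i (insert v U) := by
  obtain ⟨u, hu, hi, hj⟩ : ∃ u ∈ U, c v u ≠ i ∧ c v u ≠ j := by
    by_contra! h
    refine hW i j fun a ha b hb hab => ?_
    have hsymm := hc.1
    have hUa := @hU a
    simp only [coe_insert, Set.mem_insert_iff, mem_coe, Set.mem_singleton_iff] at *
    grind
  by_cases hstar : ∀ w ∈ U, c v w = c v u
  · exact hc.exists_isDisconnectedColor_insert_of_monochromatic_star hv hstar ⟨u, hu⟩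
      (by simpa using hW (c v u) (c v u))
  -- All edges of color `c v u` meet `v`, so they form a star, which is not spanning.
  push Not at hstar
  obtain ⟨w, hw, hwu⟩ := hstar
  refine ⟨c v u, isDisconnectedColor_of_cut (A := {y | y = v ∨ c v y = c v u})
    ⟨v, mem_insert_self v U, u, mem_insert_of_mem hu, by rintro rfl; exact hv hu, rfl⟩
    (mem_insert_self v U) (mem_insert_of_mem hw) (.inl rfl) ?_ ?_⟩
  · rintro (rfl | h)
    exacts [hv hw, hwu h]
  · intro a ha b hb hab
    have hsymm := hc.1
    have hUa := @hU a
    simp only [mem_insert, mem_coe, Set.mem_insert_iff, Set.mem_singleton_iff,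
      Set.mem_ofPred_eq] at *
    grind

theorem exists_isDisconnectedColor_insert_of_component (hc : IsGallai c) {v h : V} (hv : v ∉ U)
    (hmeet : ∀ b ∈ U, ∃ b' ∈ U, ColorConnected c i U b b' ∧ c v b' = i)
    (hdisconn : ∃ x ∈ U, ∃ y ∈ U, ¬ ColorConnected c i U x y) (hh : h ∈ U) (hvh : c v h ≠ i)
    (hW : ¬ IsColorClique c {i, c v h} (insert v U)) :
    ∃ i, IsDisconnectedColor c i (insert v U) := by
  obtain ⟨b, hb, hhb⟩ : ∃ b ∈ U, ¬ ColorConnected c i U h b := by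
    obtain ⟨x, hx, y, hy, hxy⟩ := hdisconn
    by_contra! hconn
    exact hxy (((hconn x hx).symm _ _).trans _ _ _ (hconn y hy))
  have cross_color {a d : V} (hd : d ∈ U) (ha : ColorConnected c i U h a)
      (hhd : ¬ ColorConnected c i U h d) : c a d = c v h :=
    hc.eq_of_mem_component hv hmeet hh hvh hd ha hhd
  have star_color {a : V} (haU : a ∈ U) (ha : ColorConnected c i U h a) :
      c v a = i ∨ c v a = c v h := or_iff_not_imp_left.2 fun hva =>
    (hc.eq_of_mem_component hv hmeet haU hva hb (.refl a)
      fun hab => hhb (ha.trans _ _ _ hab)).symm.trans (cross_color hb ha hhb)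
  -- Every edge leaving the component of `h` has color `i` or `c v h`, so a third color is cut off.
  obtain ⟨p, hp, q, hq, hpq, hne⟩ := not_isColorClique_iff.1 hW
  have hhv : ¬ ColorConnected c i U h v := fun hhv => hv (hhv.mem hh)
  refine ⟨c p q, isDisconnectedColor_of_cut (A := {w | ColorConnected c i U h w})
    ⟨p, hp, q, hq, hpq, rfl⟩ (mem_insert_of_mem hh) (mem_insert_self v U) (.refl h) hhv ?_⟩
  have hsymm := hc.1
  simp only [mem_insert, Set.mem_insert_iff, Set.mem_singleton_iff, Set.mem_ofPred_eq] at hne ⊢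
  grind

theorem exists_isDisconnectedColor_insert (hc : IsGallai c) {v : V} (hv : v ∉ U)
    (hU : IsDisconnectedColor c i U) (hW : ∀ i j, ¬ IsColorClique c {i, j} (insert v U)) :
    ∃ i, IsDisconnectedColor c i (insert v U) := by
  obtain ⟨⟨a₀, ha₀, b₀, hb₀, hab₀, hi⟩, hdisconn⟩ := hU
  by_cases hmeet : ∀ b ∈ U, ∃ b' ∈ U, ColorConnected c i U b b' ∧ c v b' = i
  swap
  · -- A component of `U` which `v` does not touch in color `i` remains a component.
    push Not at hmeet
    obtain ⟨b, hb, hne⟩ := hmeet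
    have not_conn : ¬ ColorConnected c i U b v := fun h => hv (h.mem hb)
    refine ⟨i, isDisconnectedColor_of_cut (A := {w | ColorConnected c i U b w})
      ⟨a₀, mem_insert_of_mem ha₀, b₀, mem_insert_of_mem hb₀, hab₀, hi⟩
      (mem_insert_of_mem hb) (mem_insert_self v U) (.refl b) not_conn ?_⟩
    intro a ha d hd had
    rcases mem_insert.1 ha with rfl | haU <;> rcases mem_insert.1 hd with rfl | hdU
    · rfl
    · exact iff_of_false not_conn fun h => hne d hdU h had
    · exact iff_of_false (fun h => hne a haU h ((hc.1 _ _).trans had)) not_conn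
    · exact ⟨fun h => h.trans _ _ _ (.rel _ _ ⟨haU, hdU, had⟩),
        fun h => h.trans _ _ _ (.symm _ _ (.rel _ _ ⟨haU, hdU, had⟩))⟩
  by_cases hstar : ∀ u ∈ U, c v u = i
  · exact hc.exists_isDisconnectedColor_insert_of_monochromatic_star hv hstar ⟨a₀, ha₀⟩
      (by simpa using hW i i)
  push Not at hstar
  obtain ⟨h, hh, hvh⟩ := hstar
  exact hc.exists_isDisconnectedColor_insert_of_component hv hmeet hdisconn hh hvh (hW i (c v h))

end Insert

theorem exists_isDisconnectedColor [Nonempty β] (hc : IsGallai c) (W : Finset V)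
    (hW : ∀ i j, ¬ IsColorClique c {i, j} W) : ∃ i, IsDisconnectedColor c i W := by
  classical
  induction W using Finset.induction_on with
  | empty =>
    obtain ⟨i⟩ := ‹Nonempty β›
    exact absurd (isColorClique_of_card_le_one (by simp)) (hW i i)
  | insert v U hv ih =>
    by_cases hU : ∃ i j, IsColorClique c {i, j} U
    · obtain ⟨i, j, hU⟩ := hU
      exact hc.exists_isDisconnectedColor_insert_of_two_colors hv hU hW
    · push Not at hU
      obtain ⟨i, hi⟩ := ih hU
      exact hc.exists_isDisconnectedColor_insert hv hi hW

end IsGallai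

section Homogeneous

variable {V β : Type*} {c : V → V → β} {i : β} {W : Finset V} {f : V → V}

/-- The fibers of `f` partition `W` into blocks such that the color between two blocks depends only
on the blocks, and `f` sends the vertices of `W` to block labels taken from `W` which span the
quotient coloring. A label need not belong to its own block. -/
def IsHomogeneousOn (c : V → V → β) (W : Finset V) (f : V → V) : Prop :=
  (∀ x ∈ W, f x ∈ W) ∧ ∀ x ∈ W, ∀ y ∈ W, f x ≠ f y → c (f x) (f y) = c x y

theorem IsHomogeneousOn.image_subset [DecidableEq V] (hf : IsHomogeneousOn c W f) :
    W.image f ⊆ W :=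
  image_subset_iff.2 hf.1

theorem IsHomogeneousOn.comp [DecidableEq V] {g : V → V} (hf : IsHomogeneousOn c (W.image g) f)
    (hg : IsHomogeneousOn c W g) : IsHomogeneousOn c W (f ∘ g) := by
  refine ⟨fun x hx => hg.image_subset (hf.1 _ (mem_image_of_mem g hx)), fun x hx y hy hne => ?_⟩
  calc c (f (g x)) (f (g y)) = c (g x) (g y) :=
        hf.2 _ (mem_image_of_mem g hx) _ (mem_image_of_mem g hy) hne
    _ = c x y := hg.2 x hx y hy fun h => hne (congrArg f h)

theorem IsDisconnectedColor.exists_isHomogeneousOn [DecidableEq V] (hi : IsDisconnectedColor c i W)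
    (hc : IsGallai c) :
    ∃ g, IsHomogeneousOn c W g ∧ W.image g ⊂ W ∧ 2 ≤ #(W.image g) := by
  obtain ⟨⟨a, ha, b, hb, hab, hcab⟩, x, hx, y, hy, hxy⟩ := hi
  let s : Setoid V := Relation.EqvGen.setoid fun a b => a ∈ W ∧ b ∈ W ∧ c a b = i
  let g (x : V) : V := (Quotient.mk s x).out
  have conn (x : V) : ColorConnected c i W x (g x) := s.symm (Quotient.mk_out x)
  have eq_iff {x y : V} : g x = g y ↔ ColorConnected c i W x y :=
    Quotient.out_inj.trans Quotient.eq
  have hg : IsHomogeneousOn c W g := by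
    refine ⟨fun x hx => (conn x).mem hx, fun x hx y hy hne => ?_⟩
    rw [Ne, eq_iff] at hne
    have hgx : g x ∈ W := (conn x).mem hx
    calc c (g x) (g y) = c (g x) y :=
          (hc.eq_of_colorConnected hgx (fun h => hne ((conn x).trans _ _ _ h)) (conn y)).symm
      _ = c y (g x) := hc.1 _ _
      _ = c y x := (hc.eq_of_colorConnected hy (fun h => hne (h.symm _ _)) (conn x)).symm
      _ = c x y := hc.1 _ _
  refine ⟨g, hg, hg.image_subset.ssubset_of_ne fun himage => hab ?_, one_lt_card.2
    ⟨g x, mem_image_of_mem g hx, g y, mem_image_of_mem g hy, fun h => hxy (eq_iff.1 h)⟩⟩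
  have hinj : Set.InjOn g W := card_image_iff.1 (congrArg card himage)
  exact hinj ha hb (eq_iff.2 (.rel _ _ ⟨ha, hb, hcab⟩))

theorem IsGallai.exists_isHomogeneousOn_two_colors [DecidableEq V] (hc : IsGallai c)
    (hW : 2 ≤ #W) :
    ∃ f i j, IsHomogeneousOn c W f ∧ 2 ≤ #(W.image f) ∧ IsColorClique c {i, j} (W.image f) := by
  induction W using Finset.strongInduction with
  | H W ih =>
    by_cases htwo : ∃ i j, IsColorClique c {i, j} W
    · obtain ⟨i, j, hij⟩ := htwo
      exact ⟨id, i, j, ⟨fun _ h => h, fun _ _ _ _ _ => rfl⟩, by simpa, by simpa⟩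
    push Not at htwo
    obtain ⟨x, -⟩ := card_pos.1 (by lia : 0 < #W)
    have : Nonempty β := ⟨c x x⟩
    obtain ⟨l, hl⟩ := hc.exists_isDisconnectedColor W htwo
    obtain ⟨g, hg, hlt, hcard⟩ := hl.exists_isHomogeneousOn hc
    obtain ⟨f, i, j, hf, hcardf, hij⟩ := ih _ hlt hcard
    exact ⟨f ∘ g, i, j, hf.comp hg, by rwa [← image_image], by rwa [← image_image]⟩

end Homogeneous

/-! ### The perfect graph inequality -/

section PerfectInequality

variable {V : Type*} {G : SimpleGraph V} {X : Finset V} {v : V}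

/-- The weighted form of the inequality `#X ≤ ω * α` satisfied by perfect graphs, on the subgraph
of `G` induced by `X`: `M` bounds the `p`-weight of cliques and `N` the `r`-weight of independent
sets. -/
def SatisfiesPerfectInequality (G : SimpleGraph V) (X : Finset V) : Prop :=
  ∀ (p r : V → ℕ) (M N : ℕ), (∀ Y ⊆ X, G.IsClique Y → ∑ y ∈ Y, p y ≤ M) →
    (∀ Y ⊆ X, G.IsIndepSet Y → ∑ y ∈ Y, r y ≤ N) → ∑ x ∈ X, p x * r x ≤ M * N

theorem SatisfiesPerfectInequality.of_compl (h : SatisfiesPerfectInequality Gᶜ X) :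
    SatisfiesPerfectInequality G X := by
  intro p r M N hM hN
  simp only [mul_comm (p _), mul_comm M]
  exact h r p N M (fun Y hY hclique => hN Y hY ((SimpleGraph.isClique_compl G).1 hclique))
    fun Y hY hindep => hM Y hY ((SimpleGraph.isIndepSet_compl G).1 hindep)

section Insert

variable [DecidableEq V]

-- An independent set has at most one neighbor of `v`. It loses the weight `r v` there, unless that
-- neighbor is lighter than `v` and can be traded for `v`.
theorem sum_tsub_add_le_of_isIndepSet [DecidableRel G.Adj] {r : V → ℕ} {N : ℕ} {Y : Finset V}
    (hv : v ∉ X) (hclique : G.IsClique (X.filter (G.Adj v)))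
    (hN : ∀ Y ⊆ insert v X, G.IsIndepSet Y → ∑ y ∈ Y, r y ≤ N) (hYX : Y ⊆ X)
    (hY : G.IsIndepSet Y) :
    ∑ y ∈ Y, (if G.Adj v y then r y - r v else r y) + r v ≤ N := by
  by_cases hheavy : ∃ s ∈ Y, G.Adj v s ∧ r v ≤ r s
  · obtain ⟨s, hs, hvs, hrs⟩ := hheavy
    have heq : ∑ y ∈ Y.erase s, (if G.Adj v y then r y - r v else r y) = ∑ y ∈ Y.erase s, r y := by
      refine sum_congr rfl fun y hy => if_neg fun hvy => ?_
      obtain ⟨hys, hy⟩ := mem_erase.1 hy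
      exact hY hy hs hys (hclique (mem_filter.2 ⟨hYX hy, hvy⟩) (mem_filter.2 ⟨hYX hs, hvs⟩) hys)
    have hle := hN Y (hYX.trans (subset_insert v X)) hY
    rw [← add_sum_erase Y _ hs] at hle ⊢
    rw [heq, if_pos hvs]
    lia
  · push Not at hheavy
    have hindep : G.IsIndepSet (insert v {y ∈ Y | ¬ G.Adj v y} : Finset V) := by
      simp only [SimpleGraph.isIndepSet_iff, coe_insert, coe_filter, Set.pairwise_insert]
      exact ⟨fun x hx y hy => hY hx.1 hy.1, fun y hy _ => ⟨hy.2, fun h => hy.2 h.symm⟩⟩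
    calc ∑ y ∈ Y, (if G.Adj v y then r y - r v else r y) + r v
        = ∑ y ∈ Y with ¬ G.Adj v y, r y + r v := by
          rw [sum_filter]
          congr 1
          refine sum_congr rfl fun y hy => ?_
          have hlight := hheavy y hy
          split_ifs <;> grind
      _ = ∑ y ∈ insert v {y ∈ Y | ¬ G.Adj v y}, r y := by
          rw [sum_insert fun h => hv (hYX (mem_filter.1 h).1), add_comm]
      _ ≤ N := hN _ (insert_subset_insert v ((filter_subset _ Y).trans hYX)) hindep

theorem SatisfiesPerfectInequality.insert_of_isClique (hv : v ∉ X)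
    (hclique : G.IsClique {x | x ∈ X ∧ G.Adj v x}) (h : SatisfiesPerfectInequality G X) :
    SatisfiesPerfectInequality G (insert v X) := by
  classical
  have hclique' : G.IsClique (X.filter (G.Adj v)) := by rwa [coe_filter]
  intro p r M N hM hN
  let q (x : V) : ℕ := if G.Adj v x then r x - r v else r x
  have hq : ∑ x ∈ X, p x * q x ≤ M * (N - r v) :=
    h p q M (N - r v) (fun Y hY => hM Y (hY.trans (subset_insert v X))) fun Y hYX hY =>
      Nat.le_sub_of_add_le (sum_tsub_add_le_of_isIndepSet hv hclique' hN hYX hY)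
  have hnbr : p v + ∑ x ∈ X with G.Adj v x, p x ≤ M := by
    rw [← sum_insert (by simp)]
    refine hM _ (insert_subset_insert v (filter_subset _ X)) ?_
    rw [coe_insert]
    exact hclique'.insert fun x hx _ => (mem_filter.1 hx).2
  have hrv : r v ≤ N := by
    simpa using hN {v} (by simp) (by simp)
  calc ∑ x ∈ insert v X, p x * r x = p v * r v + ∑ x ∈ X, p x * r x := sum_insert hv
    _ ≤ p v * r v + ∑ x ∈ X, (p x * q x + if G.Adj v x then p x * r v else 0) := by
      gcongr with x
      by_cases hvx : G.Adj v x
      · simp only [q, hvx, if_true, ← mul_add]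
        gcongr
        exact le_tsub_add
      · simp [q, hvx]
    _ = ∑ x ∈ X, p x * q x + (p v + ∑ x ∈ X with G.Adj v x, p x) * r v := by
      rw [sum_add_distrib, ← sum_filter, ← sum_mul]
      ring
    _ ≤ M * (N - r v) + M * r v := by gcongr
    _ = M * N := by rw [← mul_add, Nat.sub_add_cancel hrv]

end Insert

theorem isClique_neighbors_or_isIndepSet_nonneighbors (G : SimpleGraph V) (v : V)
    (hX : #X ≤ 3) :
    G.IsClique {x | x ∈ X ∧ G.Adj v x} ∨ G.IsIndepSet {x | x ∈ X ∧ ¬ G.Adj v x} := by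
  classical
  by_contra! h
  simp only [SimpleGraph.IsClique, SimpleGraph.IsIndepSet, Set.Pairwise, Set.mem_ofPred_eq,
    not_forall, exists_prop, not_not] at h
  obtain ⟨⟨a, ⟨ha, hva⟩, b, ⟨hb, hvb⟩, hab, -⟩, d, ⟨hd, hvd⟩, e, ⟨he, hve⟩, hde, -⟩ := h
  have hsub : ({a, b, d, e} : Finset V) ⊆ X := by simp [insert_subset_iff, *]
  have hcard : #({a, b, d, e} : Finset V) = 4 := by grind
  exact absurd (card_le_card hsub) (by lia)

theorem satisfiesPerfectInequality_of_card_le_four (hX : #X ≤ 4) :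
    SatisfiesPerfectInequality G X := by
  classical
  induction X using Finset.induction_on with
  | empty => intro p r M N _ _; simp
  | insert v X hv ih =>
    rw [card_insert_of_notMem hv] at hX
    specialize ih (by lia)
    rcases isClique_neighbors_or_isIndepSet_nonneighbors (X := X) G v (by lia) with h | h
    · exact ih.insert_of_isClique hv h
    · have hcompl : Gᶜ.IsClique {x | x ∈ X ∧ Gᶜ.Adj v x} :=
        (SimpleGraph.isClique_compl G).2 fun x hx y hy hxy => h ⟨hx.1, hx.2.2⟩ ⟨hy.1, hy.2.2⟩ hxy
      have ihcompl : SatisfiesPerfectInequality Gᶜ X := .of_compl (by rwa [compl_compl])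
      exact (ihcompl.insert_of_isClique hv hcompl).of_compl

end PerfectInequality

/-! ### The upper bound -/

section UpperBound

variable {V β : Type*} {c : V → V → β} {K P Q R : Set β} {W Y : Finset V}
  {f : V → V}

section Fibers

variable [DecidableEq V]

theorem IsHomogeneousOn.sum_colorCliqueNum_le (hf : IsHomogeneousOn c W f)
    (hY : IsColorClique c K Y) :
    ∑ s ∈ Y, colorCliqueNum c K {x ∈ W | f x = s} ≤ colorCliqueNum c K W := by
  choose T hTW hT hcard using fun s => exists_isColorClique_card_eq c K {x ∈ W | f x = s}
  have mem_T {s x : V} (hx : x ∈ T s) : x ∈ W ∧ f x = s := mem_filter.1 (hTW s hx)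
  have hunion : IsColorClique c K (Y.biUnion T) := by
    intro x hx y hy hxy
    obtain ⟨s, hs, hxs⟩ := mem_biUnion.1 hx
    obtain ⟨t, ht, hyt⟩ := mem_biUnion.1 hy
    by_cases hst : s = t
    · subst hst
      exact hT s hxs hyt hxy
    · obtain ⟨hxW, rfl⟩ := mem_T hxs
      obtain ⟨hyW, rfl⟩ := mem_T hyt
      rw [← hf.2 x hxW y hyW hst]
      exact hY hs ht hst
  calc ∑ s ∈ Y, colorCliqueNum c K {x ∈ W | f x = s} = #(Y.biUnion T) := by
        rw [card_biUnion fun s _ t _ hst => disjoint_left.2 fun x hxs hxt =>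
          hst ((mem_T hxs).2.symm.trans (mem_T hxt).2)]
        exact sum_congr rfl fun s _ => (hcard s).symm
    _ ≤ colorCliqueNum c K W :=
      hunion.card_le_colorCliqueNum (biUnion_subset.2 fun s _ x hx => (mem_T hx).1)

theorem IsHomogeneousOn.sum_colorCliqueNum_mul_le (hf : IsHomogeneousOn c W f)
    (hsymm : ∀ x y, c x y = c y x) (h4 : #(W.image f) ≤ 4)
    (hQR : IsColorClique c (Q ∪ R) (W.image f)) :
    ∑ s ∈ W.image f, colorCliqueNum c Q {x ∈ W | f x = s} * colorCliqueNum c R {x ∈ W | f x = s} ≤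
      colorCliqueNum c Q W * colorCliqueNum c R W := by
  let G : SimpleGraph V := SimpleGraph.fromRel fun x y => c x y ∈ Q
  have adj_iff {x y : V} : G.Adj x y ↔ x ≠ y ∧ c x y ∈ Q := by
    rw [SimpleGraph.fromRel_adj, hsymm y x, or_self]
  refine satisfiesPerfectInequality_of_card_le_four (G := G) h4 _ _ _ _ (fun Y _ hclique => ?_)
    fun Y hY hindep => ?_
  · exact hf.sum_colorCliqueNum_le fun x hx y hy hxy => (adj_iff.1 (hclique hx hy hxy)).2
  · exact hf.sum_colorCliqueNum_le fun x hx y hy hxy =>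
      (hQR (hY hx) (hY hy) hxy).resolve_left fun h => hindep hx hy hxy (adj_iff.2 ⟨hxy, h⟩)

theorem IsHomogeneousOn.sq_card_le_colorCliqueNum_mul (hf : IsHomogeneousOn c W f)
    (hsymm : ∀ x y, c x y = c y x) (h4 : #(W.image f) ≤ 4) (hP : IsColorClique c P (W.image f))
    (hQR : IsColorClique c (Q ∪ R) (W.image f))
    (hfiber : ∀ s ∈ W.image f, #{x ∈ W | f x = s} ^ 2 ≤ colorCliqueNum c P {x ∈ W | f x = s} *
      (colorCliqueNum c Q {x ∈ W | f x = s} * colorCliqueNum c R {x ∈ W | f x = s})) :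
    #W ^ 2 ≤ colorCliqueNum c P W * (colorCliqueNum c Q W * colorCliqueNum c R W) :=
  calc #W ^ 2 = (∑ s ∈ W.image f, #{x ∈ W | f x = s}) ^ 2 := by rw [← card_eq_sum_card_image]
    _ ≤ (∑ s ∈ W.image f, colorCliqueNum c P {x ∈ W | f x = s}) *
        ∑ s ∈ W.image f,
          colorCliqueNum c Q {x ∈ W | f x = s} * colorCliqueNum c R {x ∈ W | f x = s} :=
      sum_sq_le_sum_mul_sum_of_sq_le_mul _ (fun _ _ => Nat.zero_le _) (fun _ _ => Nat.zero_le _)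
        hfiber
    _ ≤ colorCliqueNum c P W * (colorCliqueNum c Q W * colorCliqueNum c R W) :=
      Nat.mul_le_mul (hf.sum_colorCliqueNum_le hP)
        (hf.sum_colorCliqueNum_mul_le hsymm h4 hQR)

end Fibers

theorem IsGallai.sq_card_le_colorCliqueNum_mul (hc : IsGallai c)
    (h4 : ∀ i j, ∀ S, IsColorClique c {i, j} S → #S ≤ 4) (hPQ : IsColorClique c (P ∪ Q) W)
    (hQR : IsColorClique c (Q ∪ R) W) (hPR : IsColorClique c (P ∪ R) W) :
    #W ^ 2 ≤ colorCliqueNum c P W * (colorCliqueNum c Q W * colorCliqueNum c R W) := by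
  classical
  induction W using Finset.strongInduction with
  | H W ih =>
    rcases le_or_gt #W 1 with hW | hW
    · have hle (K : Set β) : #W ≤ colorCliqueNum c K W :=
        (isColorClique_of_card_le_one hW).card_le_colorCliqueNum subset_rfl
      calc #W ^ 2 = #W * (#W * #W) := by interval_cases #W <;> rfl
        _ ≤ colorCliqueNum c P W * (colorCliqueNum c Q W * colorCliqueNum c R W) :=
          Nat.mul_le_mul (hle P) (Nat.mul_le_mul (hle Q) (hle R))
    obtain ⟨f, i, j, hf, htwo, hij⟩ := hc.exists_isHomogeneousOn_two_colors hW
    have hX : #(W.image f) ≤ 4 := h4 i j _ hij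
    have hPQX := hPQ.subset hf.image_subset
    have hQRX := hQR.subset hf.image_subset
    have hPRX := hPR.subset hf.image_subset
    have hfiber (s : V) :
        #{x ∈ W | f x = s} ^ 2 ≤ colorCliqueNum c P {x ∈ W | f x = s} *
          (colorCliqueNum c Q {x ∈ W | f x = s} * colorCliqueNum c R {x ∈ W | f x = s}) := by
      have hsub : {x ∈ W | f x = s} ⊆ W := filter_subset _ W
      refine ih _ (hsub.ssubset_of_ne fun h => ?_) (hPQ.subset hsub) (hQR.subset hsub)
        (hPR.subset hsub)
      have himage : W.image f ⊆ {s} :=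
        image_subset_iff.2 fun x hx => mem_singleton.2 (filter_eq_self.1 h x hx)
      exact absurd (card_le_card himage) (by rw [card_singleton]; lia)
    rcases hij.or_of_two_colors hPQX hQRX hPRX with hP | hQ | hR
    · exact hf.sq_card_le_colorCliqueNum_mul hc.1 hX hP hQRX fun s _ => hfiber s
    · rw [mul_left_comm]
      exact hf.sq_card_le_colorCliqueNum_mul hc.1 hX hQ hPRX fun s _ =>
        (hfiber s).trans_eq (mul_left_comm _ _ _)
    · rw [← mul_assoc, mul_comm]
      exact hf.sq_card_le_colorCliqueNum_mul hc.1 hX hR hPQX fun s _ =>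
        (hfiber s).trans_eq (by ring)

theorem IsGallai.card_le_two_pow (hc : IsGallai c)
    (h4 : ∀ i j, ∀ S, IsColorClique c {i, j} S → #S ≤ 4) {K : Finset β} (hK : 2 ≤ #K)
    (hW : IsColorClique c K W) : #W ≤ 2 ^ #K := by
  classical
  obtain ⟨n, hn⟩ : ∃ n, #K = n := ⟨_, rfl⟩
  rw [hn] at hK ⊢
  induction n, hK using Nat.le_induction generalizing K W with
  | base =>
    obtain ⟨i, j, -, rfl⟩ := card_eq_two.1 hn
    exact h4 i j W (by simpa using hW)
  | succ n _ ih =>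
    obtain ⟨a, ha, b, hb, hab⟩ := one_lt_card.1 (by lia : 1 < #K)
    have erase_le {x : β} (hx : x ∈ K) : colorCliqueNum c (K.erase x) W ≤ 2 ^ n :=
      colorCliqueNum_le fun X _ hX => ih hX (by rw [card_erase_of_mem hx, hn, Nat.add_sub_cancel])
    have hsq : #W ^ 2 ≤ (2 ^ (n + 1)) ^ 2 := calc
      #W ^ 2 ≤ colorCliqueNum c {a, b} W *
          (colorCliqueNum c (K.erase a) W * colorCliqueNum c (K.erase b) W) := by
        refine hc.sq_card_le_colorCliqueNum_mul h4 (hW.mono ?_) (hW.mono ?_) (hW.mono ?_) <;>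
        · intro x hx
          simp only [Set.mem_union, mem_coe, mem_erase, Set.mem_insert_iff,
            Set.mem_singleton_iff] at hx ⊢
          grind
      _ ≤ 4 * (2 ^ n * 2 ^ n) := by
        gcongr
        exacts [colorCliqueNum_le fun X _ => h4 a b X, erase_le ha, erase_le hb]
      _ = (2 ^ (n + 1)) ^ 2 := by ring
    exact (Nat.pow_le_pow_iff_left two_ne_zero).1 hsq

theorem IsGallai.exists_card_colorsOn_le_two [DecidableEq V] [DecidableEq β] [Fintype β] [Fintype V]
    (hc : IsGallai c) (hβ : 2 ≤ Fintype.card β) (hV : 2 ^ Fintype.card β < Fintype.card V) :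
    ∃ S : Finset V, #S = 5 ∧ #(colorsOn c S) ≤ 2 := by
  by_contra! h
  have h4 (i j : β) (S : Finset V) (hS : IsColorClique c {i, j} S) : #S ≤ 4 := by
    by_contra! hlt
    obtain ⟨T, hTS, hT⟩ := exists_subset_card_eq (Nat.succ_le_of_lt hlt)
    have hsub : colorsOn c T ⊆ {i, j} := colorsOn_subset_iff.2 (by simpa using hS.subset hTS)
    exact (h T hT).not_ge ((card_le_card hsub).trans card_le_two)
  have huniv : IsColorClique c (univ : Finset β) univ := fun x _ y _ _ => by simp
  exact hV.not_ge (hc.card_le_two_pow h4 hβ huniv)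

end UpperBound

/-! ### The lower bound -/

section LowerBound

variable {V β : Type*} {c : V → V → β}

theorem card_le_two_pow_card_colorsOn [DecidableEq V] [DecidableEq β] (e : V → β → Bool)
    (he : ∀ x y, x ≠ y → e x (c x y) ≠ e y (c x y)) (S : Finset V) :
    #S ≤ 2 ^ #(colorsOn c S) := by
  let restrict (x : S) (i : colorsOn c S) : Bool := e x i
  have hinj : Function.Injective restrict := by
    intro x y hxy
    by_contra hne
    have hne' : (x : V) ≠ y := Subtype.coe_ne_coe.2 hne
    have hmem : c x y ∈ colorsOn c S :=
      mem_image.2 ⟨(x, y), mem_filter.2 ⟨mk_mem_product x.2 y.2, hne'⟩, rfl⟩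
    exact he x y hne' (congrFun hxy ⟨c x y, hmem⟩)
  simpa using Fintype.card_le_of_injective restrict hinj

theorem isGallai_firstDiff {E : ℕ → Type*} {e : V → ∀ n, E n} (he : Function.Injective e) :
    IsGallai fun x y => PiNat.firstDiff (e x) (e y) := by
  refine ⟨fun x y => PiNat.firstDiff_comm _ _, fun x y z hxy hxz hyz => ?_⟩
  have hxyz := PiNat.min_firstDiff_le (e x) (e y) (e z) (he.ne hxz)
  have hxzy := PiNat.min_firstDiff_le (e x) (e z) (e y) (he.ne hxy)
  have hyxz := PiNat.min_firstDiff_le (e y) (e x) (e z) (he.ne hyz)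
  rw [PiNat.firstDiff_comm (e z) (e y)] at hxzy
  rw [PiNat.firstDiff_comm (e y) (e x)] at hyxz
  lia

theorem firstDiff_testBit_lt {k x y : ℕ} (hk : 0 < k) (hx : x < 2 ^ k) (hy : y < 2 ^ k) :
    PiNat.firstDiff (E := fun _ => Bool) x.testBit y.testBit < k := by
  by_cases hxy : x.testBit = y.testBit
  · rwa [hxy, PiNat.firstDiff_def, dif_neg (not_not.2 rfl)]
  · have testBit_eq_false {z m : ℕ} (hz : z < 2 ^ k) (hm : k ≤ m) : z.testBit m = false :=
      Nat.testBit_lt_two_pow (hz.trans_le (Nat.pow_le_pow_right two_pos hm))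
    by_contra! hle
    exact PiNat.apply_firstDiff_ne (E := fun _ => Bool) hxy
      ((testBit_eq_false hx hle).trans (testBit_eq_false hy hle).symm)

theorem exists_isGallai_card_le_two_pow {k n : ℕ} (hk : 0 < k) (hn : n ≤ 2 ^ k) :
    ∃ c : Fin n → Fin n → Fin k, IsGallai c ∧ ∀ S, #S ≤ 2 ^ #(colorsOn c S) := by
  let bits (x : Fin n) : ℕ → Bool := (x : ℕ).testBit
  have bits_injective : Function.Injective bits := fun x y hxy =>
    Fin.ext (Nat.eq_of_testBit_eq (congrFun hxy))
  let c (x y : Fin n) : Fin k :=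
    ⟨PiNat.firstDiff (bits x) (bits y), firstDiff_testBit_lt hk (by lia) (by lia)⟩
  refine ⟨c, ?_, card_le_two_pow_card_colorsOn (fun x i => bits x i) fun x y hxy =>
    PiNat.apply_firstDiff_ne (bits_injective.ne hxy)⟩
  simpa [IsGallai, c, Fin.ext_iff] using isGallai_firstDiff bits_injective

theorem exists_isGallai_three_le_card_colorsOn {k n : ℕ} (hk : 0 < k) (hn : n ≤ 2 ^ k) :
    ∃ c : Fin n → Fin n → Fin k, IsGallai c ∧ ∀ S, #S = 5 → 3 ≤ #(colorsOn c S) := by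
  obtain ⟨c, hc, hcard⟩ := exists_isGallai_card_le_two_pow hk hn
  refine ⟨c, hc, fun S hS => Nat.lt_of_not_ge fun hle => absurd (hcard S) ?_⟩
  have hpow : 2 ^ #(colorsOn c S) ≤ 2 ^ 2 := Nat.pow_le_pow_right two_pos hle
  lia

end LowerBound

theorem gallaiNum_two_five (k : ℕ) (hk : 2 ≤ k) :
    gallaiNum k 2 5 = 2 ^ k + 1 ∧
    (∀ c : Fin (2 ^ k + 1) → Fin (2 ^ k + 1) → Fin k, IsGallai c →
      ∃ S : Finset (Fin (2 ^ k + 1)), S.card = 5 ∧ (colorsOn c S).card ≤ 2) ∧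
    (∃ c : Fin (2 ^ k) → Fin (2 ^ k) → Fin k, IsGallai c ∧
      ∀ S : Finset (Fin (2 ^ k)), S.card = 5 → 3 ≤ (colorsOn c S).card) := by
  have upper (c : Fin (2 ^ k + 1) → Fin (2 ^ k + 1) → Fin k) (hc : IsGallai c) :
      ∃ S : Finset (Fin (2 ^ k + 1)), #S = 5 ∧ #(colorsOn c S) ≤ 2 :=
    hc.exists_card_colorsOn_le_two (by simpa) (by simp)
  have lower {n : ℕ} (hn : n ≤ 2 ^ k) := exists_isGallai_three_le_card_colorsOn (by lia) hn
  refine ⟨IsLeast.csInf_eq ⟨⟨Nat.succ_pos _, upper⟩, ?_⟩, upper, lower le_rfl⟩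
  rintro n ⟨-, hn⟩
  by_contra! hlt
  obtain ⟨c, hc, hthree⟩ := lower (Nat.le_of_lt_succ hlt)
  obtain ⟨S, hS, htwo⟩ := hn c hc
  exact absurd (hthree S hS) (by lia)
end

section
/- g^4_3(6) = 8; that is, every Gallai-4-coloring of K_8 contains a set of 6 vertices spanning edges in at most 3 colors, and there exists a Gallai-4-coloring of K_7 in which every set of 6 vertices spans edges in at least 4 colors. -/
open Finset

/-! The cover number of a color is the least number of vertices meeting all its edges. If four
colors on `K_8` all had cover number at least `3`, the cover numbers truncated at `3` would sum to
`12`; but a Gallai coloring of `K_n` with `n ≥ 7`, in any number of colors, has truncated sum at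
most `2 * n - 5`. This follows by induction on `n` along Gallai partitions: only two colors occur
between the parts, so the edges between the parts add at most `2 * 3` to the sum over the parts, and
less if a single color occurs between two sides of the vertex set or if some part misses few
vertices. -/

variable {V W β : Type*} {c : V → V → β}

section Triangles

theorem IsGallai.comp {e : W → V} (hc : IsGallai c) (he : e.Injective) :
    IsGallai fun x y => c (e x) (e y) :=
  ⟨fun _ _ => hc.1 _ _, fun _ _ _ hab had hbd => hc.2 _ _ _ (he.ne hab) (he.ne had) (he.ne hbd)⟩

theorem IsGallai.eq_of_ne_of_ne (hc : IsGallai c) {x y z : V} (hxy : x ≠ y) (hxz : x ≠ z)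
    (hyz : y ≠ z) (h₁ : c x y ≠ c y z) (h₂ : c x z ≠ c y z) : c x y = c x z := by
  have := hc.2 x y z hxy hxz hyz
  tauto

end Triangles

section GallaiPartition

variable {i j r b : β} {S X A B : Finset V}

/-- All edges between `A` and `B` have color `i`. -/
def IsJoined (c : V → V → β) (i : β) (A B : Finset V) : Prop :=
  ∀ x ∈ A, ∀ y ∈ B, c x y = i

theorem IsJoined.symm (hsymm : ∀ x y, c x y = c y x) (h : IsJoined c i A B) : IsJoined c i B A :=
  fun x hx y hy => (hsymm x y).trans (h y hy x hx)

theorem IsJoined.unique (hi : IsJoined c i A B) (hj : IsJoined c j A B)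
    (hA : A.Nonempty) (hB : B.Nonempty) : i = j :=
  let ⟨x, hx⟩ := hA
  let ⟨y, hy⟩ := hB
  (hi x hx y hy).symm.trans (hj x hx y hy)

variable [DecidableEq V] {P : Finpartition S}

/-- `X` is one side of a partition of `S` such that every edge between the two sides has color `r`
or `b`. The sides may be empty. -/
def IsTwoColorCut (c : V → V → β) (r b : β) (S X : Finset V) : Prop :=
  X ⊆ S ∧ ∀ x ∈ X, ∀ y ∈ S \ X, c x y = r ∨ c x y = b

/-- A Gallai partition of `S` with reduced colors `r` and `b`, possibly equal: all edges between
two given parts have the same color, which is `r` or `b`. -/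
def IsGallaiPartition (c : V → V → β) (r b : β) (P : Finpartition S) : Prop :=
  2 ≤ #P.parts ∧ ∀ A ∈ P.parts, ∀ B ∈ P.parts, A ≠ B → IsJoined c r A B ∨ IsJoined c b A B

/-- `S` splits into two nonempty sides with all edges between them of one color. -/
def HasMonochromaticCut (c : V → V → β) (S : Finset V) : Prop :=
  ∃ X ⊂ S, X.Nonempty ∧ ∃ i, IsJoined c i X (S \ X)

theorem IsTwoColorCut.compl (hsymm : ∀ x y, c x y = c y x) (hX : IsTwoColorCut c r b S X) :
    IsTwoColorCut c r b S (S \ X) := by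
  refine ⟨sdiff_subset, fun x hx y hy => ?_⟩
  rw [Finset.sdiff_sdiff_eq_self hX.1] at hy
  rw [hsymm]
  exact hX.2 y hy x hx

/-- An edge between `{z ∈ X | c x z = r}` and the rest of `X` forms a triangle with `x` whose other
two edges have colors `r` and `b`. -/
theorem IsTwoColorCut.filter (hc : IsGallai c) (hX : IsTwoColorCut c r b S X) {x : V}
    (hx : x ∈ S \ X) [DecidablePred fun z => c x z = r] :
    IsTwoColorCut c r b S {z ∈ X | c x z = r} := by
  refine ⟨(filter_subset _ _).trans hX.1, fun y hy z hz => ?_⟩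
  obtain ⟨hyX, hy⟩ := mem_filter.1 hy
  obtain ⟨hzS, hz⟩ := mem_sdiff.1 hz
  by_cases hzX : z ∈ X
  · have hzr : c x z ≠ r := fun h => hz (mem_filter.2 ⟨hzX, h⟩)
    have hzb : c x z = b := by
      simpa only [hc.1 z x, hzr, false_or] using hX.2 z hzX x hx
    have hxX := (mem_sdiff.1 hx).2
    by_contra! hyz
    refine hzr ?_
    rw [← hy]
    refine (hc.eq_of_ne_of_ne (ne_of_mem_of_not_mem hyX hxX).symm
      (ne_of_mem_of_not_mem hzX hxX).symm ?_ ?_ ?_).symm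
    · rintro rfl; exact hzr hy
    · rw [hy]; exact hyz.1.symm
    · rw [hzb]; exact hyz.2.symm
  · exact hX.2 y hyX z (mem_sdiff.2 ⟨hzS, hzX⟩)

open Classical in
/-- The partition of `S` into the classes of vertices not separated by any cut with colors `r` and
`b`. It is a Gallai partition as soon as one such cut has two nonempty sides. -/
noncomputable def cutPartition (c : V → V → β) (r b : β) (S : Finset V) : Finpartition S :=
  Finpartition.atomise S {X ∈ S.powerset | IsTwoColorCut c r b S X}

theorem mem_iff_mem_of_mem_cutPartition (hA : A ∈ (cutPartition c r b S).parts)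
    (hX : IsTwoColorCut c r b S X) {y z : V} (hy : y ∈ A) (hz : z ∈ A) : y ∈ X ↔ z ∈ X := by
  obtain ⟨-, Q, -, rfl⟩ := Finpartition.mem_atomise.1 hA
  classical
  have hXF := mem_filter.2 ⟨mem_powerset.2 hX.1, hX⟩
  rw [← (mem_filter.1 hy).2 X hXF, (mem_filter.1 hz).2 X hXF]

theorem exists_twoColorCut_of_mem_cutPartition (hsymm : ∀ x y, c x y = c y x)
    (hA : A ∈ (cutPartition c r b S).parts) {x y : V} (hx : x ∈ S \ A) (hy : y ∈ A) :
    ∃ X, IsTwoColorCut c r b S X ∧ x ∈ S \ X ∧ y ∈ X := by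
  classical
  obtain ⟨hxS, hxA⟩ := mem_sdiff.1 hx
  have hyS := (cutPartition c r b S).le hA hy
  obtain ⟨-, Q, -, rfl⟩ := Finpartition.mem_atomise.1 hA
  have hyQ := (mem_filter.1 hy).2
  obtain ⟨X, hXF, hX⟩ : ∃ X ∈ ({X ∈ S.powerset | IsTwoColorCut c r b S X} : Finset _),
      ¬(y ∈ X ↔ x ∈ X) := by
    by_contra! h
    exact hxA (mem_filter.2 ⟨hxS, fun X hX => (hyQ X hX).trans (h X hX)⟩)
  have hcut := (mem_filter.1 hXF).2
  by_cases hyX : y ∈ X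
  · exact ⟨X, hcut, mem_sdiff.2 ⟨hxS, by tauto⟩, hyX⟩
  · refine ⟨S \ X, hcut.compl hsymm, ?_, mem_sdiff.2 ⟨hyS, hyX⟩⟩
    rw [Finset.sdiff_sdiff_eq_self hcut.1]
    tauto

theorem IsGallai.eq_of_mem_cutPartition (hc : IsGallai c)
    (hA : A ∈ (cutPartition c r b S).parts) {x y z : V} (hx : x ∈ S \ A) (hy : y ∈ A)
    (hz : z ∈ A) : c x y = c x z := by
  classical
  obtain ⟨X, hX, hxX, hyX⟩ := exists_twoColorCut_of_mem_cutPartition hc.1 hA hx hy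
  have hzX := (mem_iff_mem_of_mem_cutPartition hA hX hy hz).1 hyX
  have hr := mem_iff_mem_of_mem_cutPartition hA (hX.filter hc hxX) hy hz
  have hy' := hX.2 y hyX x hxX
  have hz' := hX.2 z hzX x hxX
  rw [hc.1] at hy' hz'
  simp only [mem_filter, hyX, hzX, true_and] at hr
  by_cases h : c x y = r
  · rw [h, hr.1 h]
  · rw [hy'.resolve_left h, hz'.resolve_left (mt hr.2 h)]

theorem IsTwoColorCut.two_le_card_parts (hX : IsTwoColorCut c r b S X) (hne : X.Nonempty)
    (hXS : X ≠ S) : 2 ≤ #(cutPartition c r b S).parts := by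
  obtain ⟨x, hx⟩ := hne
  obtain ⟨y, hyS, hyX⟩ := exists_of_ssubset (hX.1.ssubset_of_ne hXS)
  obtain ⟨A, hA, hxA⟩ := (cutPartition c r b S).exists_mem (hX.1 hx)
  obtain ⟨B, hB, hyB⟩ := (cutPartition c r b S).exists_mem hyS
  refine one_lt_card.2 ⟨A, hA, B, hB, ?_⟩
  rintro rfl
  exact hyX ((mem_iff_mem_of_mem_cutPartition hA hX hxA hyB).1 hx)

theorem mem_sdiff_of_mem_parts (hA : A ∈ P.parts)
    (hB : B ∈ P.parts) (hAB : A ≠ B) {x : V} (hx : x ∈ A) : x ∈ S \ B :=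
  mem_sdiff.2 ⟨P.le hA hx, fun hxB => hAB (P.eq_of_mem_parts hA hB hx hxB)⟩

theorem IsTwoColorCut.isGallaiPartition (hX : IsTwoColorCut c r b S X) (hc : IsGallai c)
    (hne : X.Nonempty) (hXS : X ≠ S) : IsGallaiPartition c r b (cutPartition c r b S) := by
  refine ⟨hX.two_le_card_parts hne hXS, fun A hA B hB hAB => ?_⟩
  obtain ⟨x, hx⟩ := (cutPartition c r b S).nonempty_of_mem_parts hA
  obtain ⟨y, hy⟩ := (cutPartition c r b S).nonempty_of_mem_parts hB
  have hconst : ∀ x' ∈ A, ∀ y' ∈ B, c x' y' = c x y := by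
    intro x' hx' y' hy'
    calc c x' y' = c x' y := hc.eq_of_mem_cutPartition hB
          (mem_sdiff_of_mem_parts hA hB hAB hx') hy' hy
      _ = c y x' := hc.1 _ _
      _ = c y x := hc.eq_of_mem_cutPartition hA
          (mem_sdiff_of_mem_parts hB hA hAB.symm hy) hx' hx
      _ = c x y := hc.1 _ _
  obtain ⟨Y, hY, hxY, hyY⟩ := exists_twoColorCut_of_mem_cutPartition hc.1 hB
    (mem_sdiff_of_mem_parts hA hB hAB hx) hy
  rw [hc.1 x y] at hconst
  exact (hY.2 y hyY x hxY).imp (fun h x' hx' y' hy' => (hconst x' hx' y' hy').trans h)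
    (fun h x' hx' y' hy' => (hconst x' hx' y' hy').trans h)

theorem isTwoColorCut_singleton {v : V} (hv : v ∈ S) (h : ∀ x ∈ S, x ≠ v → c v x = r ∨ c v x = b) :
    IsTwoColorCut c r b S {v} := by
  refine ⟨singleton_subset_iff.2 hv, fun x hx y hy => ?_⟩
  rw [mem_sdiff, mem_singleton] at hy
  rw [mem_singleton.1 hx]
  exact h y hy.1 hy.2

theorem IsGallaiPartition.eq_or_eq (hP : IsGallaiPartition c r b P)
    (hA : A ∈ P.parts) (hB : B ∈ P.parts) (hAB : A ≠ B) {x y : V} (hx : x ∈ A) (hy : y ∈ B) :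
    c x y = r ∨ c x y = b :=
  (hP.2 A hA B hB hAB).imp (fun h => h x hx y hy) (fun h => h x hx y hy)

theorem IsGallaiPartition.eq_of_mem_of_mem (hP : IsGallaiPartition c r b P)
    (hA : A ∈ P.parts) (hB : B ∈ P.parts) (hAB : A ≠ B) {x x' y y' : V} (hx : x ∈ A) (hx' : x' ∈ A)
    (hy : y ∈ B) (hy' : y' ∈ B) : c x y = c x' y' := by
  rcases hP.2 A hA B hB hAB with h | h <;> rw [h x hx y hy, h x' hx' y' hy']

theorem IsGallaiPartition.exists_parts_ne (hP : IsGallaiPartition c r b P) (A : Finset V) :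
    ∃ B ∈ P.parts, B ≠ A :=
  exists_mem_ne hP.1 A

/-- Two edges from `v` in non-reduced colors that end in different parts have the same color, and
every part contains such an end, so only one non-reduced color occurs at `v`. -/
theorem IsGallaiPartition.exists_third_color (hP : IsGallaiPartition c r b P) (hc : IsGallai c)
    {v : V} (hv : v ∉ S) (h : ∀ A ∈ P.parts, ∃ x ∈ A, c v x ≠ r ∧ c v x ≠ b) :
    ∃ g, g ≠ r ∧ g ≠ b ∧ ∀ x ∈ S, c v x = g ∨ c v x = r ∨ c v x = b := by
  have across {A B : Finset V} {x y : V} (hA : A ∈ P.parts) (hB : B ∈ P.parts) (hAB : A ≠ B)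
      (hx : x ∈ A) (hy : y ∈ B) (hvx : c v x ≠ r ∧ c v x ≠ b) (hvy : c v y ≠ r ∧ c v y ≠ b) :
      c v x = c v y := by
    have hxy := hP.eq_or_eq hA hB hAB hx hy
    refine hc.eq_of_ne_of_ne (ne_of_mem_of_not_mem (P.le hA hx) hv).symm
      (ne_of_mem_of_not_mem (P.le hB hy) hv).symm ?_ ?_ ?_
    · rintro rfl; exact hAB (P.eq_of_mem_parts hA hB hx hy)
    · rcases hxy with e | e <;> rw [e]; exacts [hvx.1, hvx.2]
    · rcases hxy with e | e <;> rw [e]; exacts [hvy.1, hvy.2]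
  obtain ⟨A, hA, -⟩ := hP.exists_parts_ne ∅
  obtain ⟨B, hB, hBA⟩ := hP.exists_parts_ne A
  obtain ⟨a, haA, ha⟩ := h A hA
  obtain ⟨a', haB, ha'⟩ := h B hB
  refine ⟨c v a, ha.1, ha.2, fun x hx => ?_⟩
  obtain ⟨D, hD, hxD⟩ := P.exists_mem hx
  by_contra! hvx
  by_cases hDA : D = A
  · subst hDA
    exact hvx.1 ((across hD hB hBA.symm hxD haB hvx.2 ha').trans
      (across hB hD hBA haB haA ha' ha))
  · exact hvx.1 (across hD hA hDA hxD haA hvx.2 ha)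

/-- If `A` is joined to the part containing `z` by an edge of color other than `c v y`, some
triangle on `v`, `y` and that part is rainbow. -/
theorem IsGallaiPartition.eq_of_ne_third_color (hP : IsGallaiPartition c r b P) (hc : IsGallai c)
    {g : β} {v : V} (hv : v ∉ S) (hgr : g ≠ r) (hgb : g ≠ b)
    (h : ∀ A ∈ P.parts, ∃ x ∈ A, c v x = g) (hA : A ∈ P.parts) {x y z : V} (hx : x ∈ A)
    (hy : y ∈ A) (hvy : c v y ≠ g) (hz : z ∈ S \ A) : c x z = c v y := by
  obtain ⟨hzS, hzA⟩ := mem_sdiff.1 hz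
  obtain ⟨B, hB, hzB⟩ := P.exists_mem hzS
  obtain ⟨w, hwB, hw⟩ := h B hB
  have hAB : A ≠ B := by rintro rfl; exact hzA hzB
  rw [hP.eq_of_mem_of_mem hA hB hAB hx hy hzB hwB, hc.1 v y]
  refine (hc.eq_of_ne_of_ne (ne_of_mem_of_not_mem (P.le hA hy) hv) ?_
    (ne_of_mem_of_not_mem (P.le hB hwB) hv).symm ?_ ?_).symm
  · rintro rfl; exact hAB (P.eq_of_mem_parts hA hB hy hwB)
  · rwa [hw, hc.1]
  · rw [hw]
    rcases hP.eq_or_eq hA hB hAB hy hwB with e | e <;> rw [e]; exacts [hgr.symm, hgb.symm]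

theorem IsGallaiPartition.isTwoColorCut_insert (hP : IsGallaiPartition c r b P)
    (hsymm : ∀ x y, c x y = c y x) {v : V} (hA : A ∈ P.parts) (h : ∀ x ∈ A, c v x = r ∨ c v x = b) :
    IsTwoColorCut c r b (insert v S) A := by
  refine ⟨(P.le hA).trans (subset_insert v S), fun x hx y hy => ?_⟩
  obtain ⟨hyS, hyA⟩ := mem_sdiff.1 hy
  obtain rfl | hyS := mem_insert.1 hyS
  · rw [hsymm]
    exact h x hx
  · obtain ⟨B, hB, hyB⟩ := P.exists_mem hyS
    exact hP.eq_or_eq hA hB (by rintro rfl; exact hyA hyB) hx hyB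

theorem IsGallaiPartition.isTwoColorCut_insert_of_third_color (hP : IsGallaiPartition c r b P)
    (hc : IsGallai c) {g : β} {v : V} (hv : v ∉ S) (hgr : g ≠ r) (hgb : g ≠ b)
    (h : ∀ A ∈ P.parts, ∃ x ∈ A, c v x = g) (hA : A ∈ P.parts) {y : V} (hy : y ∈ A)
    (hvy : c v y ≠ g) : IsTwoColorCut c g (c v y) (insert v S) A := by
  refine ⟨(P.le hA).trans (subset_insert v S), fun x hx z hz => ?_⟩
  obtain ⟨hzS, hzA⟩ := mem_sdiff.1 hz
  obtain rfl | hzS := mem_insert.1 hzS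
  · obtain ⟨D, hD, hDA⟩ := hP.exists_parts_ne A
    obtain ⟨w, hwD⟩ := P.nonempty_of_mem_parts hD
    have hw := mem_sdiff_of_mem_parts hD hA hDA hwD
    rw [hc.1 x, or_iff_not_imp_left]
    intro hvx
    rw [← hP.eq_of_ne_third_color hc hv hgr hgb h hA hx hx hvx hw,
      ← hP.eq_of_ne_third_color hc hv hgr hgb h hA hx hy hvy hw]
  · exact Or.inr (hP.eq_of_ne_third_color hc hv hgr hgb h hA hx hy hvy (mem_sdiff.2 ⟨hzS, hzA⟩))

theorem IsGallaiPartition.exists_cut_insert (hP : IsGallaiPartition c r b P) (hc : IsGallai c)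
    {v : V} (hv : v ∉ S) : ∃ r' b' X, IsTwoColorCut c r' b' (insert v S) X ∧ X.Nonempty ∧
      X ≠ insert v S := by
  have part_ne {A : Finset V} (hA : A ∈ P.parts) : A ≠ insert v S :=
    fun h => hv (P.le hA (h ▸ mem_insert_self v S))
  by_cases hpart : ∃ A ∈ P.parts, ∀ x ∈ A, c v x = r ∨ c v x = b
  · obtain ⟨A, hA, hvA⟩ := hpart
    exact ⟨r, b, A, hP.isTwoColorCut_insert hc.1 hA hvA, P.nonempty_of_mem_parts hA, part_ne hA⟩
  push Not at hpart
  obtain ⟨g, hgr, hgb, hg⟩ := hP.exists_third_color hc hv hpart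
  have hpart_g : ∀ A ∈ P.parts, ∃ x ∈ A, c v x = g := fun A hA =>
    let ⟨x, hx, hvx⟩ := hpart A hA
    ⟨x, hx, (hg x (P.le hA hx)).resolve_right (not_or.2 hvx)⟩
  by_cases hall : ∀ x ∈ S, c v x = g
  · obtain ⟨B, hB, -⟩ := hP.exists_parts_ne ∅
    obtain ⟨x, hx⟩ := P.nonempty_of_mem_parts hB
    refine ⟨g, g, {v}, isTwoColorCut_singleton (mem_insert_self v S) fun x hx hxv =>
      Or.inl (hall x (mem_of_mem_insert_of_ne hx hxv)), singleton_nonempty v, fun h => ?_⟩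
    exact hv (mem_singleton.1 (h ▸ mem_insert_of_mem (P.le hB hx)) ▸ P.le hB hx)
  · push Not at hall
    obtain ⟨y, hyS, hvy⟩ := hall
    obtain ⟨A, hA, hyA⟩ := P.exists_mem hyS
    exact ⟨g, c v y, A, hP.isTwoColorCut_insert_of_third_color hc hv hgr hgb hpart_g hA hyA hvy,
      ⟨y, hyA⟩, part_ne hA⟩

/-- By induction on `S`: a Gallai partition of `S` yields a cut of `insert v S` in two colors, and
all the cuts in these two colors together yield a Gallai partition of `insert v S`. -/
theorem IsGallai.exists_gallaiPartition (hc : IsGallai c) (hS : S.Nontrivial) :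
    ∃ r b, ∃ P : Finpartition S, IsGallaiPartition c r b P := by
  induction S using Finset.induction_on with
  | empty => exact absurd hS not_nontrivial_empty
  | insert v S hv ih =>
    obtain ⟨r, b, X, hX, hne, hXS⟩ : ∃ r b X, IsTwoColorCut c r b (insert v S) X ∧ X.Nonempty ∧
        X ≠ insert v S := by
      by_cases hS' : S.Nontrivial
      · obtain ⟨r, b, P, hP⟩ := ih hS'
        exact hP.exists_cut_insert hc hv
      · obtain ⟨w, hw, hwv⟩ := hS.exists_ne v
        have hwS := mem_of_mem_insert_of_ne hw hwv
        refine ⟨c v w, c v w, {v}, isTwoColorCut_singleton (mem_insert_self v S)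
          fun x hx hxv => ?_, singleton_nonempty v, hS.ne_singleton.symm⟩
        rw [Set.not_nontrivial_iff.1 hS' (mem_of_mem_insert_of_ne hx hxv) hwS, or_self]
    exact ⟨r, b, _, hX.isGallaiPartition hc hne hXS⟩

theorem IsGallaiPartition.ssubset_of_mem (hP : IsGallaiPartition c r b P) (hA : A ∈ P.parts) :
    A ⊂ S := by
  refine (P.le hA).ssubset_of_ne ?_
  rintro rfl
  obtain ⟨B, hB, hBA⟩ := hP.exists_parts_ne A
  obtain ⟨y, hy⟩ := P.nonempty_of_mem_parts hB
  exact hBA (P.eq_of_mem_parts hB hA hy (P.le hB hy))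

theorem IsGallaiPartition.exists_not_isJoined (hP : IsGallaiPartition c r b P)
    (hS : ¬HasMonochromaticCut c S) (hA : A ∈ P.parts) (i : β) :
    ∃ B ∈ P.parts, A ≠ B ∧ ¬IsJoined c i A B := by
  by_contra! h
  refine hS ⟨A, hP.ssubset_of_mem hA, P.nonempty_of_mem_parts hA, i, fun x hx y hy => ?_⟩
  obtain ⟨hyS, hyA⟩ := mem_sdiff.1 hy
  obtain ⟨B, hB, hyB⟩ := P.exists_mem hyS
  exact h B hB (by rintro rfl; exact hyA hyB) x hx y hyB

theorem IsGallaiPartition.exists_isJoined (hP : IsGallaiPartition c r b P)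
    (hS : ¬HasMonochromaticCut c S) (hA : A ∈ P.parts) :
    ∃ B ∈ P.parts, A ≠ B ∧ IsJoined c r A B :=
  let ⟨B, hB, hAB, h⟩ := hP.exists_not_isJoined hS hA b
  ⟨B, hB, hAB, (hP.2 A hA B hB hAB).resolve_right h⟩

theorem IsGallaiPartition.symm (hP : IsGallaiPartition c r b P) : IsGallaiPartition c b r P :=
  ⟨hP.1, fun A hA B hB hAB => (hP.2 A hA B hB hAB).symm⟩

theorem IsGallaiPartition.ne (hP : IsGallaiPartition c r b P) (hS : ¬HasMonochromaticCut c S) :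
    r ≠ b := by
  rintro rfl
  obtain ⟨A, hA, -⟩ := hP.exists_parts_ne ∅
  obtain ⟨B, hB, hAB, h⟩ := hP.exists_not_isJoined hS hA r
  exact h ((hP.2 A hA B hB hAB).elim id id)

theorem IsGallaiPartition.part_ne_of_isJoined (hP : IsGallaiPartition c r b P)
    (hS : ¬HasMonochromaticCut c S) {C : Finset V} (hA : A ∈ P.parts) (hB : B ∈ P.parts)
    (hAB : IsJoined c r A B) (hAC : IsJoined c b A C) : B ≠ C := by
  rintro rfl
  exact hP.ne hS (hAB.unique hAC (P.nonempty_of_mem_parts hA) (P.nonempty_of_mem_parts hB))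

/-- Otherwise `B` would be joined to everything else in color `r`. -/
theorem IsGallaiPartition.exists_fourth_part (hP : IsGallaiPartition c r b P)
    (hS : ¬HasMonochromaticCut c S) {C : Finset V} (hA : A ∈ P.parts) (hB : B ∈ P.parts)
    (hC : C ∈ P.parts) (hBA : IsJoined c r B A) (hBC : IsJoined c r B C) :
    ∃ D ∈ P.parts, D ≠ A ∧ D ≠ B ∧ D ≠ C :=
  let ⟨D, hD, hBD, h⟩ := hP.symm.exists_isJoined hS hB
  ⟨D, hD, (hP.part_ne_of_isJoined hS hB hA hBA h).symm, hBD.symm,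
    (hP.part_ne_of_isJoined hS hB hC hBC h).symm⟩

theorem IsGallaiPartition.four_le_card_parts (hP : IsGallaiPartition c r b P)
    (hsymm : ∀ x y, c x y = c y x) (hS : ¬HasMonochromaticCut c S) : 4 ≤ #P.parts := by
  obtain ⟨A, hA, -⟩ := hP.exists_parts_ne ∅
  obtain ⟨B, hB, hAB, hABr⟩ := hP.exists_isJoined hS hA
  obtain ⟨C, hC, hAC, hACb⟩ := hP.symm.exists_isJoined hS hA
  have hBC := hP.part_ne_of_isJoined hS hA hB hABr hACb
  obtain ⟨D, hD, hDA, hDB, hDC⟩ : ∃ D ∈ P.parts, D ≠ A ∧ D ≠ B ∧ D ≠ C := by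
    rcases hP.2 B hB C hC hBC with h | h
    · exact hP.exists_fourth_part hS hA hB hC (hABr.symm hsymm) h
    · obtain ⟨D, hD, hDA, hDC, hDB⟩ :=
        hP.symm.exists_fourth_part hS hA hC hB (hACb.symm hsymm) (h.symm hsymm)
      exact ⟨D, hD, hDA, hDB, hDC⟩
  calc 4 = #{D, A, B, C} := by
        rw [card_insert_of_notMem (by simp [*]), card_eq_three.2 ⟨A, B, C, hAB, hAC, hBC, rfl⟩]
    _ ≤ #P.parts := card_le_card (by simp [insert_subset_iff, *])

/-- `S \ A` covers every edge that is not inside `A`, and a vertex `w` joined to `A` in color `j`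
can be spared from it when only the edges of the other colors are to be covered. -/
theorem mem_erase_or_mem_erase (hsymm : ∀ x y, c x y = c y x) {x y w : V} (hx : x ∈ S) (hy : y ∈ S)
    (hxy : x ≠ y) (hA : x ∈ A → y ∉ A) (hw : ∀ a ∈ A, c a w = j) (hne : c x y ≠ j) :
    x ∈ (S \ A).erase w ∨ y ∈ (S \ A).erase w := by
  by_contra! hmem
  simp only [mem_erase, mem_sdiff, hx, hy, true_and, not_and_not_right] at hmem
  by_cases hxA : x ∈ A
  · have hyw : y = w := by_contra fun h => hA hxA (hmem.2 h)
    exact hne (hyw ▸ hw x hxA)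
  · have hxw : x = w := by_contra fun h => hxA (hmem.1 h)
    exact hne ((hsymm x y).trans (hxw ▸ hw y (hmem.2 fun hyw => hxy (hxw.trans hyw.symm))))

end GallaiPartition

section CoverNumber

variable [DecidableEq V] [DecidableEq β] {i r b : β} {S T X Y A : Finset V}
  {Q : Finset (Finset V)}

theorem mem_colorsOn : i ∈ colorsOn c S ↔ ∃ x ∈ S, ∃ y ∈ S, x ≠ y ∧ c x y = i := by
  simp only [colorsOn, mem_image, mem_filter, mem_product, Prod.exists]
  tauto

theorem colorsOn_mono (h : S ⊆ T) : colorsOn c S ⊆ colorsOn c T :=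
  image_subset_image (filter_subset_filter _ (product_subset_product h h))

/-- The cover number of the color `i` on `S`: the least number of vertices whose deletion from `S`
destroys all edges of color `i`. -/
noncomputable def coverNum (c : V → V → β) (i : β) (S : Finset V) : ℕ :=
  sInf {t | ∃ T : Finset V, #T = t ∧ i ∉ colorsOn c (S \ T)}

theorem coverNum_le_card (h : i ∉ colorsOn c (S \ T)) : coverNum c i S ≤ #T :=
  Nat.sInf_le ⟨T, rfl, h⟩

theorem exists_card_eq_coverNum (c : V → V → β) (i : β) (S : Finset V) :
    ∃ T : Finset V, #T = coverNum c i S ∧ i ∉ colorsOn c (S \ T) :=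
  Nat.sInf_mem (s := {t | ∃ T : Finset V, #T = t ∧ i ∉ colorsOn c (S \ T)})
    ⟨#S, S, rfl, by simp [colorsOn]⟩

theorem coverNum_le_card_add_sum (h : ∀ x ∈ S, ∀ y ∈ S, x ≠ y → c x y = i →
      x ∈ T ∨ y ∈ T ∨ ∃ A ∈ Q, x ∈ A ∧ y ∈ A) :
    coverNum c i S ≤ #T + ∑ A ∈ Q, coverNum c i A := by
  choose U hUcard hU using exists_card_eq_coverNum c i
  have hcover : i ∉ colorsOn c (S \ (T ∪ Q.biUnion U)) := by
    rw [mem_colorsOn]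
    rintro ⟨x, hx, y, hy, hxy, hi⟩
    simp only [mem_sdiff, mem_union, mem_biUnion, not_or, not_exists, not_and] at hx hy
    rcases h x hx.1 y hy.1 hxy hi with hT | hT | ⟨A, hA, hxA, hyA⟩
    · exact hx.2.1 hT
    · exact hy.2.1 hT
    · exact hU A (mem_colorsOn.2 ⟨x, mem_sdiff.2 ⟨hxA, hx.2.2 A hA⟩, y,
        mem_sdiff.2 ⟨hyA, hy.2.2 A hA⟩, hxy, hi⟩)
  calc coverNum c i S ≤ #(T ∪ Q.biUnion U) := coverNum_le_card hcover
    _ ≤ #T + #(Q.biUnion U) := card_union_le _ _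
    _ ≤ #T + ∑ A ∈ Q, #(U A) := by gcongr; exact card_biUnion_le
    _ = #T + ∑ A ∈ Q, coverNum c i A := by simp only [hUcard]

theorem min_add_sum_le {ι : Type*} (k a : ℕ) (s : Finset ι) (f : ι → ℕ) :
    min k (a + ∑ j ∈ s, f j) ≤ min k a + ∑ j ∈ s, min k (f j) := by
  have hadd : ∀ x y, min k (x + y) ≤ min k x + min k y := by omega
  exact (hadd _ _).trans (Nat.add_le_add_left
    (le_sum_of_subadditive (min k) (Nat.min_zero k).le hadd s f) _)

variable [Fintype β]

/-- The sum of the cover numbers of all colors on `S`, each truncated at `3`. A cover number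
below `3` means that deleting two vertices can destroy the color. -/
noncomputable def truncCoverSum (c : V → V → β) (S : Finset V) : ℕ :=
  ∑ i, min 3 (coverNum c i S)

theorem truncCoverSum_le_of_crossing (h : ∀ x ∈ S, ∀ y ∈ S, x ≠ y → (∃ A ∈ Q, x ∈ A ∧ y ∈ A) ∨
      c x y = r ∧ (x ∈ X ∨ y ∈ X) ∨ c x y = b ∧ (x ∈ Y ∨ y ∈ Y)) :
    truncCoverSum c S ≤ min 3 #X + min 3 #Y + ∑ A ∈ Q, truncCoverSum c A := by
  have hcolor (i : β) : min 3 (coverNum c i S) ≤ (if i = r then min 3 #X else 0) +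
      (if i = b then min 3 #Y else 0) + ∑ A ∈ Q, min 3 (coverNum c i A) := by
    have hcover : coverNum c i S ≤
        #((if i = r then X else ∅) ∪ if i = b then Y else ∅) + ∑ A ∈ Q, coverNum c i A := by
      refine coverNum_le_card_add_sum fun x hx y hy hxy hi => ?_
      rcases h x hx y hy hxy with hA | ⟨hr, hX⟩ | ⟨hb, hY⟩
      · exact Or.inr (Or.inr hA)
      · simp only [← hi, hr, if_true, mem_union]; tauto
      · simp only [← hi, hb, if_true, mem_union]; tauto
    refine (min_le_min_left 3 hcover).trans ((min_add_sum_le 3 _ _ _).trans ?_)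
    gcongr
    have := card_union_le (if i = r then X else ∅) (if i = b then Y else ∅)
    simp only [apply_ite card, card_empty] at this
    split_ifs at this ⊢ <;> omega
  calc truncCoverSum c S ≤ ∑ i, ((if i = r then min 3 #X else 0) +
        (if i = b then min 3 #Y else 0) + ∑ A ∈ Q, min 3 (coverNum c i A)) :=
        sum_le_sum fun i _ => hcolor i
    _ = min 3 #X + min 3 #Y + ∑ A ∈ Q, truncCoverSum c A := by
        simp only [sum_add_distrib, sum_ite_eq', mem_univ, if_true, truncCoverSum]
        rw [sum_comm]

theorem truncCoverSum_of_card_le_one (hS : #S ≤ 1) : truncCoverSum c S = 0 := by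
  refine sum_eq_zero fun i _ => ?_
  have hi : i ∉ colorsOn c (S \ ∅) := by
    rw [sdiff_empty, mem_colorsOn]
    rintro ⟨x, hx, y, hy, hxy, -⟩
    exact hxy (card_le_one.1 hS x hx y hy)
  have := coverNum_le_card hi
  rw [card_empty] at this
  omega

theorem truncCoverSum_le_of_isJoined (hsymm : ∀ x y, c x y = c y x) (hXS : X ⊆ S) (hX : X.Nonempty)
    (h : IsJoined c i X (S \ X)) : truncCoverSum c S ≤
      truncCoverSum c X + truncCoverSum c (S \ X) + min 3 (min #X #(S \ X)) := by
  have hside : ∀ U, U = X ∨ U = S \ X → truncCoverSum c S ≤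
      truncCoverSum c X + truncCoverSum c (S \ X) + min 3 #U := by
    intro U hU
    have hcross : ∀ x ∈ S, ∀ y ∈ S, x ≠ y → (∃ A ∈ ({X, S \ X} : Finset _), x ∈ A ∧ y ∈ A) ∨
        c x y = i ∧ (x ∈ U ∨ y ∈ U) ∨ c x y = i ∧ (x ∈ (∅ : Finset V) ∨ y ∈ (∅ : Finset V)) := by
      intro x hx y hy _
      by_cases hxX : x ∈ X <;> by_cases hyX : y ∈ X
      · exact Or.inl ⟨X, by simp [hxX, hyX]⟩
      · refine Or.inr (Or.inl ⟨h x hxX y (mem_sdiff.2 ⟨hy, hyX⟩), ?_⟩)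
        rcases hU with rfl | rfl <;> simp [hxX, hyX, hy]
      · refine Or.inr (Or.inl ⟨(hsymm x y).trans (h y hyX x (mem_sdiff.2 ⟨hx, hxX⟩)), ?_⟩)
        rcases hU with rfl | rfl <;> simp [hxX, hyX, hx]
      · exact Or.inl ⟨S \ X, by simp [hx, hy, hxX, hyX]⟩
    calc truncCoverSum c S ≤ min 3 #U + min 3 #∅ + ∑ A ∈ {X, S \ X}, truncCoverSum c A :=
          truncCoverSum_le_of_crossing hcross
      _ = truncCoverSum c X + truncCoverSum c (S \ X) + min 3 #U := by
          rw [sum_pair (disjoint_sdiff.ne hX.ne_empty), card_empty]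
          omega
  rcases min_choice #X #(S \ X) with hmin | hmin <;> rw [hmin]
  exacts [hside X (Or.inl rfl), hside _ (Or.inr rfl)]

theorem IsGallaiPartition.truncCoverSum_le {P : Finpartition S}
    (hP : IsGallaiPartition c r b P) (hsymm : ∀ x y, c x y = c y x) (hS : ¬HasMonochromaticCut c S)
    (hA : A ∈ P.parts) :
    truncCoverSum c S ≤ 2 * min 3 (#(S \ A) - 1) + ∑ B ∈ P.parts, truncCoverSum c B := by
  obtain ⟨B, hB, hAB, hABr⟩ := hP.exists_isJoined hS hA
  obtain ⟨C, hC, hAC, hACb⟩ := hP.symm.exists_isJoined hS hA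
  obtain ⟨u, hu⟩ := P.nonempty_of_mem_parts hB
  obtain ⟨v, hv⟩ := P.nonempty_of_mem_parts hC
  have huA := mem_sdiff_of_mem_parts hB hA hAB.symm hu
  have hvA := mem_sdiff_of_mem_parts hC hA hAC.symm hv
  have hcross : ∀ x ∈ S, ∀ y ∈ S, x ≠ y → (∃ D ∈ P.parts, x ∈ D ∧ y ∈ D) ∨
      c x y = r ∧ (x ∈ (S \ A).erase v ∨ y ∈ (S \ A).erase v) ∨
      c x y = b ∧ (x ∈ (S \ A).erase u ∨ y ∈ (S \ A).erase u) := by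
    intro x hx y hy hxy
    obtain ⟨D, hD, hxD⟩ := P.exists_mem hx
    obtain ⟨E, hE, hyE⟩ := P.exists_mem hy
    by_cases hDE : D = E
    · exact Or.inl ⟨D, hD, hxD, hDE ▸ hyE⟩
    have hxyA : x ∈ A → y ∉ A := fun hxA hyA =>
      hDE ((P.eq_of_mem_parts hD hA hxD hxA).trans (P.eq_of_mem_parts hA hE hyA hyE))
    refine Or.inr ((hP.eq_or_eq hD hE hDE hxD hyE).imp (fun h => ⟨h, ?_⟩) fun h => ⟨h, ?_⟩)
    · exact mem_erase_or_mem_erase hsymm hx hy hxy hxyA (fun a ha => hACb a ha v hv)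
        (h.trans_ne (hP.ne hS))
    · exact mem_erase_or_mem_erase hsymm hx hy hxy hxyA (fun a ha => hABr a ha u hu)
        (h.trans_ne (hP.ne hS).symm)
  calc truncCoverSum c S
      ≤ min 3 #((S \ A).erase v) + min 3 #((S \ A).erase u) + ∑ D ∈ P.parts, truncCoverSum c D :=
        truncCoverSum_le_of_crossing hcross
    _ = 2 * min 3 (#(S \ A) - 1) + ∑ D ∈ P.parts, truncCoverSum c D := by
        rw [card_erase_of_mem huA, card_erase_of_mem hvA, two_mul]

end CoverNumber

section Bound

/-- The bound on `truncCoverSum` for `n` vertices; the values for small `n` are chosen as small as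
the induction along Gallai partitions allows. -/
def coverBound (n : ℕ) : ℕ :=
  if n ≤ 3 then n - 1 else if n ≤ 6 then 2 * n - 4 else 2 * n - 5

theorem coverBound_add_min_le {m n : ℕ} (hm : 0 < m) (hn : 0 < n) :
    coverBound m + coverBound n + min 3 (min m n) ≤ coverBound (m + n) := by
  unfold coverBound
  split_ifs <;> omega

theorem coverBound_add_le (m n : ℕ) :
    coverBound (m + 1) + coverBound (n + 1) ≤ coverBound (m + n + 1) := by
  unfold coverBound
  split_ifs <;> omega

theorem coverBound_add_add_le {m d : ℕ} (hm : 2 ≤ m) (hd : 3 ≤ d) :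
    coverBound m + coverBound (d - 2) + 2 * min 3 (d - 1) ≤ coverBound (m + d) := by
  unfold coverBound
  split_ifs <;> omega

theorem coverBound_mono : Monotone coverBound := by
  intro m n hmn
  unfold coverBound
  split_ifs <;> omega

theorem sum_coverBound_succ_le {ι : Type*} (s : Finset ι) (f : ι → ℕ) :
    ∑ j ∈ s, coverBound (f j + 1) ≤ coverBound (∑ j ∈ s, f j + 1) := by
  classical
  induction s using Finset.induction_on with
  | empty => simp
  | insert j s hj ih =>
    rw [sum_insert hj, sum_insert hj]
    exact (Nat.add_le_add_left ih _).trans (coverBound_add_le ..)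

variable [DecidableEq V] {S : Finset V} {P : Finpartition S}

/-- A part with at least two vertices is the right choice for `A`. -/
theorem exists_part_add_sum_coverBound_le (hP : 4 ≤ #P.parts) : ∃ A ∈ P.parts,
    2 * min 3 (#(S \ A) - 1) + ∑ B ∈ P.parts, coverBound #B ≤ coverBound #S := by
  by_cases hbig : ∃ A ∈ P.parts, 2 ≤ #A
  · obtain ⟨A, hA, hA2⟩ := hbig
    have hAS := card_sdiff_add_card_eq_card (P.le hA)
    have hpos : ∀ B ∈ P.parts.erase A, #B - 1 + 1 = #B := fun B hB =>
      Nat.sub_add_cancel (P.nonempty_of_mem_parts (mem_of_mem_erase hB)).card_pos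
    have hexcess : ∑ B ∈ P.parts.erase A, (#B - 1) + (#P.parts - 1) = #(S \ A) := by
      have hsum := add_sum_erase _ card hA
      rw [P.sum_card_parts, ← sum_congr rfl hpos, sum_add_distrib, sum_const, smul_eq_mul,
        mul_one, card_erase_of_mem hA] at hsum
      omega
    have hothers : ∑ B ∈ P.parts.erase A, coverBound #B ≤ coverBound (#(S \ A) - 2) :=
      calc ∑ B ∈ P.parts.erase A, coverBound #B
          = ∑ B ∈ P.parts.erase A, coverBound (#B - 1 + 1) :=
            sum_congr rfl fun B hB => by rw [hpos B hB]
        _ ≤ coverBound (∑ B ∈ P.parts.erase A, (#B - 1) + 1) := sum_coverBound_succ_le _ _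
        _ ≤ coverBound (#(S \ A) - 2) := coverBound_mono (by omega)
    refine ⟨A, hA, ?_⟩
    have := coverBound_add_add_le hA2 (d := #(S \ A)) (by omega)
    rw [← add_sum_erase _ _ hA, ← hAS, add_comm #(S \ A)]
    omega
  · push Not at hbig
    have hone : ∀ B ∈ P.parts, #B = 1 := fun B hB =>
      le_antisymm (Nat.le_of_lt_succ (hbig B hB)) (P.nonempty_of_mem_parts hB).card_pos
    obtain ⟨A, hA⟩ := card_pos.1 (by omega : 0 < #P.parts)
    have hS : #S = #P.parts := by rw [← P.sum_card_parts, sum_congr rfl hone, sum_const]; simp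
    have hAS := card_sdiff_add_card_eq_card (P.le hA)
    refine ⟨A, hA, ?_⟩
    rw [sum_congr rfl fun B hB => by rw [hone B hB]]
    have hAone := hone A hA
    simp only [sum_const, smul_eq_mul, coverBound]
    split_ifs <;> omega

variable [DecidableEq β] [Fintype β]

theorem IsGallai.truncCoverSum_le_coverBound (hc : IsGallai c) (S : Finset V) :
    truncCoverSum c S ≤ coverBound #S := by
  induction S using Finset.strongInduction with
  | H S ih =>
    rcases le_or_gt #S 1 with hcard | hcard
    · exact (truncCoverSum_of_card_le_one hcard).trans_le (Nat.zero_le _)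
    by_cases hS : HasMonochromaticCut c S
    · obtain ⟨X, hXS, hX, i, hi⟩ := hS
      have hY := sdiff_nonempty.2 hXS.not_subset
      calc truncCoverSum c S
          ≤ truncCoverSum c X + truncCoverSum c (S \ X) + min 3 (min #X #(S \ X)) :=
            truncCoverSum_le_of_isJoined hc.1 hXS.1 hX hi
        _ ≤ coverBound #X + coverBound #(S \ X) + min 3 (min #X #(S \ X)) := by
            gcongr
            exacts [ih X hXS, ih _ (sdiff_ssubset hXS.1 hX)]
        _ ≤ coverBound (#X + #(S \ X)) := coverBound_add_min_le hX.card_pos hY.card_pos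
        _ = coverBound #S := by rw [add_comm, card_sdiff_add_card_eq_card hXS.1]
    · obtain ⟨r, b, P, hP⟩ := hc.exists_gallaiPartition (one_lt_card_iff_nontrivial.1 hcard)
      obtain ⟨A, hA, hbound⟩ := exists_part_add_sum_coverBound_le (hP.four_le_card_parts hc.1 hS)
      calc truncCoverSum c S
          ≤ 2 * min 3 (#(S \ A) - 1) + ∑ B ∈ P.parts, truncCoverSum c B :=
            hP.truncCoverSum_le hc.1 hS hA
        _ ≤ 2 * min 3 (#(S \ A) - 1) + ∑ B ∈ P.parts, coverBound #B := by
            gcongr with B hB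
            exact ih B (hP.ssubset_of_mem hB)
        _ ≤ coverBound #S := hbound

theorem IsGallai.exists_card_colorsOn_lt [Fintype V] (hc : IsGallai c)
    (h : coverBound (Fintype.card V) < 3 * Fintype.card β) :
    ∃ S : Finset V, #S = Fintype.card V - 2 ∧ #(colorsOn c S) < Fintype.card β := by
  obtain ⟨i, hi⟩ : ∃ i, coverNum c i univ < 3 := by
    by_contra! h3
    have hsum : truncCoverSum c univ = 3 * Fintype.card β := by
      simp [truncCoverSum, h3, mul_comm]
    have := hc.truncCoverSum_le_coverBound univ
    rw [hsum, card_univ] at this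
    omega
  obtain ⟨T, hT, hiT⟩ := exists_card_eq_coverNum c i univ
  obtain ⟨S, hST, hS⟩ : ∃ S ⊆ univ \ T, #S = Fintype.card V - 2 := by
    refine exists_subset_card_eq ?_
    rw [← compl_eq_univ_sdiff, card_compl]
    omega
  exact ⟨S, hS, card_lt_univ_of_notMem fun hiS => hiT (colorsOn_mono hST hiS)⟩

end Bound

section Extremal

theorem colorsOn_map [DecidableEq V] [DecidableEq W] [DecidableEq β] (e : W ↪ V) (S : Finset W) :
    colorsOn c (S.map e) = colorsOn (fun x y => c (e x) (e y)) S := by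
  ext i
  simp [mem_colorsOn]

theorem gallaiNum_eq_succ {k q p n : ℕ} {c : Fin n → Fin n → Fin k} (hc : IsGallai c)
    (hlower : ∀ S : Finset (Fin n), #S = p → q < #(colorsOn c S))
    (hupper : ∀ d : Fin (n + 1) → Fin (n + 1) → Fin k, IsGallai d →
      ∃ S : Finset (Fin (n + 1)), #S = p ∧ #(colorsOn d S) ≤ q) :
    gallaiNum k q p = n + 1 := by
  refine IsLeast.csInf_eq ⟨⟨n.succ_pos, hupper⟩, fun m ⟨_, hm⟩ => ?_⟩
  by_contra! hmn
  obtain ⟨S, hS, hcolors⟩ := hm _ (hc.comp (Fin.castLEEmb (Nat.le_of_lt_succ hmn)).injective)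
  rw [← colorsOn_map] at hcolors
  exact (hlower _ ((card_map _).trans hS)).not_ge hcolors

/-- The extremal coloring of `K_7`: color `3` on the triangle `0, 1, 2`, color `1` on the path
`3, 4, 5, 6`, color `2` on the complement of that path, and color `0` between the triangle and the
path. -/
def extremalColoring (x y : Fin 7) : Fin 4 :=
  if x < 3 ∧ y < 3 then 3
  else if x < 3 ∨ y < 3 then 0
  else if x + 1 = y ∨ y + 1 = x then 1
  else 2

theorem isGallai_extremalColoring : IsGallai extremalColoring := by
  unfold IsGallai
  decide +kernel

theorem exists_extremalColoring_eq (v : Fin 7) (i : Fin 4) :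
    ∃ x y, x ≠ v ∧ y ≠ v ∧ x ≠ y ∧ extremalColoring x y = i := by
  revert v i
  decide +kernel

theorem colorsOn_extremalColoring {S : Finset (Fin 7)} (hS : #S = 6) :
    colorsOn extremalColoring S = univ := by
  obtain ⟨v, hv⟩ : ∃ v, Sᶜ = {v} := card_eq_one.1 (by rw [card_compl, hS, Fintype.card_fin])
  have hmem (x : Fin 7) (hx : x ≠ v) : x ∈ S := by
    rwa [← notMem_compl, hv, mem_singleton]
  refine eq_univ_of_forall fun i => ?_
  obtain ⟨x, y, hx, hy, hxy, hi⟩ := exists_extremalColoring_eq v i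
  exact mem_colorsOn.2 ⟨x, hmem x hx, y, hmem y hy, hxy, hi⟩

end Extremal

theorem gallaiNum_four_three_six :
    gallaiNum 4 3 6 = 8 ∧
    (∀ c : Fin 8 → Fin 8 → Fin 4, IsGallai c →
      ∃ S : Finset (Fin 8), S.card = 6 ∧ (colorsOn c S).card ≤ 3) ∧
    (∃ c : Fin 7 → Fin 7 → Fin 4, IsGallai c ∧
      ∀ S : Finset (Fin 7), S.card = 6 → 4 ≤ (colorsOn c S).card) := by
  have hupper (c : Fin 8 → Fin 8 → Fin 4) (hc : IsGallai c) :
      ∃ S : Finset (Fin 8), #S = 6 ∧ #(colorsOn c S) ≤ 3 := by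
    obtain ⟨S, hS, hcolors⟩ := hc.exists_card_colorsOn_lt (by simp [coverBound])
    exact ⟨S, hS, Nat.le_of_lt_succ hcolors⟩
  have hlower (S : Finset (Fin 7)) (hS : #S = 6) : 4 ≤ #(colorsOn extremalColoring S) := by
    rw [colorsOn_extremalColoring hS, card_univ, Fintype.card_fin]
  exact ⟨gallaiNum_eq_succ isGallai_extremalColoring hlower hupper, hupper, extremalColoring,
    isGallai_extremalColoring, hlower⟩
end
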